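/- Let λ ∈ [1/3, 1/2), let K ⊂ ℝ² be a nonempty compact set satisfying K = F₁(K) ∪ F₂(K) ∪ F₃(K) ∪ F₄(K) for the von Koch similarity maps with parameter λ, and let Ω be the bounded connected component of ℝ² ∖ (G₁(K) ∪ G₂(K) ∪ G₃(K)), the snowflake domain. Then Ω is not a J-John domain for any J > (1/2 − λ)/λ. -/

import Mathlib

open Metric Set MeasureTheory

noncomputable section

abbrev Plane := EuclideanSpace ℝ (Fin 2)

/-- An open axis-parallel cube in `ℝ^d` with side length `s`. -/
def IsCube {d : ℕ} (Q : Set (EuclideanSpace ℝ (Fin d))) (s : ℝ) : Prop :=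
  0 < s ∧ ∃ c : Fin d → ℝ, Q = {x | ∀ i, x i ∈ Set.Ioo (c i) (c i + s)}

/-- The curve condition with exponent `p` and constant `C`: any two points of the
complement of `Ω` can be joined by a unit-speed (1-Lipschitz) curve in the complement
along which the arclength integral of `dist(·, ∂Ω)^(1-p)` is at most `C‖z₁-z₂‖^(2-p)`. -/
def CurveCondition (Ω : Set Plane) (p C : ℝ) : Prop :=
  ∀ z₁ ∈ Ωᶜ, ∀ z₂ ∈ Ωᶜ, ∃ (L : ℝ) (γ : ℝ → Plane), 0 ≤ L ∧
    LipschitzOnWith 1 γ (Set.Icc 0 L) ∧ γ 0 = z₁ ∧ γ L = z₂ ∧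
    (∀ t ∈ Set.Icc (0:ℝ) L, γ t ∈ Ωᶜ) ∧
    (∫ t in (0:ℝ)..L, Metric.infDist (γ t) (frontier Ω) ^ (1 - p)) ≤ C * ‖z₁ - z₂‖ ^ (2 - p)

/-- `Ω` is a `J`-John domain: there is a center `x₀` such that every point can be joined
to `x₀` by a unit-speed (1-Lipschitz) curve `γ` in `Ω` with `dist(γ t, ∂Ω) ≥ J·t`. -/
def IsJohnDomain (Ω : Set Plane) (J : ℝ) : Prop :=
  ∃ x₀ ∈ Ω, ∀ x ∈ Ω, ∃ (ℓ : ℝ) (γ : ℝ → Plane), 0 ≤ ℓ ∧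
    LipschitzOnWith 1 γ (Set.Icc 0 ℓ) ∧ γ 0 = x ∧ γ ℓ = x₀ ∧
    (∀ t ∈ Set.Icc (0:ℝ) ℓ, γ t ∈ Ω ∧ J * t ≤ Metric.infDist (γ t) (frontier Ω))

/-- `Ω` is a Jordan domain: a bounded domain whose boundary is a homeomorphic
image of the circle. -/
def IsJordanDomain (Ω : Set Plane) : Prop :=
  IsOpen Ω ∧ IsConnected Ω ∧ Bornology.IsBounded Ω ∧
  ∃ f : (Metric.sphere (0 : Plane) 1) → Plane,
    Continuous f ∧ Function.Injective f ∧ Set.range f = frontier Ω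

/-- `E` is weakly mean porous with parameters `(α, lam)`: there is a pairwise disjoint
collection `D` of open cubes in the complement of `E` and a `j₀` such that for every
`x ∈ E` and `j ≥ j₀`, more than half of the scales `k ∈ {1,…,j}` admit at least `lam k`
cubes of `D` of side length at least `α(2^(-k))` inside the annulus
`B(x,2^(-k)) ∖ B(x,2^(-k-1))`. -/
def WeaklyMeanPorous {d : ℕ} (E : Set (EuclideanSpace ℝ (Fin d)))
    (α : ℝ → ℝ) (lam : ℕ → ℝ) : Prop :=
  ∃ (D : Set (Set (EuclideanSpace ℝ (Fin d)))) (j₀ : ℕ), 0 < j₀ ∧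
    (∀ Q ∈ D, (∃ s, IsCube Q s) ∧ Q ⊆ Eᶜ) ∧ D.Pairwise Disjoint ∧
    ∀ x ∈ E, ∀ j : ℕ, j₀ ≤ j →
      (j : ℝ) / 2 < ({k : ℕ | k ∈ Finset.Icc 1 j ∧
        ∃ S : Finset (Set (EuclideanSpace ℝ (Fin d))), lam k ≤ S.card ∧
          ∀ Q ∈ S, Q ∈ D ∧
            Q ⊆ Metric.ball x ((2:ℝ) ^ (-(k:ℝ))) \ Metric.ball x ((2:ℝ) ^ (-(k:ℝ) - 1)) ∧
            ∃ s, α ((2:ℝ) ^ (-(k:ℝ))) ≤ s ∧ IsCube Q s}).ncard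

/-- The point `(a,b)` of the Euclidean plane. -/
def pt (a b : ℝ) : Plane := (WithLp.equiv 2 (Fin 2 → ℝ)).symm ![a, b]

/-- Rotation of the plane by angle `τ` about the origin. -/
def rot (τ : ℝ) (x : Plane) : Plane :=
  pt (Real.cos τ * x 0 - Real.sin τ * x 1) (Real.sin τ * x 0 + Real.cos τ * x 1)

/-- The angle `θ ∈ (0,π)` with `cos θ = (1/2 - l)/l`. -/
def kochAngle (l : ℝ) : ℝ := Real.arccos ((1/2 - l) / l)

/-- The similarity maps `F₁, F₂, F₃, F₄` of the von Koch curve with parameter `l`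
(here `h = √(l - 1/4)`). -/
def kochF (l : ℝ) : Fin 4 → Plane → Plane :=
  ![fun x => l • x,
    fun x => rot (kochAngle l) (l • x) + pt l 0,
    fun x => rot (-kochAngle l) (l • x) + pt (1/2) (Real.sqrt (l - 1/4)),
    fun x => l • x + pt (1 - l) 0]

/-- The placement maps `G₁, G₂, G₃` for the snowflake domain. -/
def kochG : Fin 3 → Plane → Plane :=
  ![fun x => x,
    fun x => rot (-(2 * Real.pi / 3)) x + pt 1 0,
    fun x => rot (2 * Real.pi / 3) x + pt (1/2) (-(Real.sqrt 3 / 2))]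

/-- The union of the three placed copies of the Koch curve `K`, forming the
boundary of the snowflake. -/
def snowflakeBoundary (K : Set Plane) : Set Plane :=
  kochG 0 '' K ∪ kochG 1 '' K ∪ kochG 2 '' K

structure Ctx (l h : ℝ) : Prop where
  hl1 : 1/3 ≤ l
  hl2 : l < 1/2
  hpos : 0 < h
  hh : h ^ 2 = l - 1/4
  hdef : h = Real.sqrt (l - 1/4)

theorem pt_zero (a b : ℝ) : (pt a b) 0 = a := by simp [pt]
theorem pt_one (a b : ℝ) : (pt a b) 1 = b := by simp [pt]

theorem plane_ext {z w : Plane} (h0 : z 0 = w 0) (h1 : z 1 = w 1) : z = w := by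
  ext i; fin_cases i
  · exact h0
  · exact h1

theorem plane_dist (z w : Plane) :
    dist z w = Real.sqrt ((z 0 - w 0)^2 + (z 1 - w 1)^2) := by
  rw [EuclideanSpace.dist_eq]; simp [Real.dist_eq, sq_abs]

theorem ctx_cos {l h : ℝ} (c : Ctx l h) : Real.cos (kochAngle l) = (1/2 - l)/l := by
  have := c.hl1
  have := c.hl2
  unfold kochAngle
  apply Real.cos_arccos
  · have : 0 ≤ (1/2 - l)/l := by apply div_nonneg <;> linarith
    linarith
  · rw [div_le_one (by linarith)]; linarith

theorem ctx_sin {l h : ℝ} (c : Ctx l h) : Real.sin (kochAngle l) = h/l := by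
  have h1 := c.hl1
  have h2 := c.hpos
  unfold kochAngle
  rw [Real.sin_arccos]
  have : l ≠ 0 := by linarith
  rw [show 1 - ((1 / 2 - l) / l) ^ 2 = (h / l) ^ 2 by
    field_simp
    linear_combination (-4) * c.hh]
  exact Real.sqrt_sq (by apply div_nonneg <;> linarith)

theorem F0_0 {l : ℝ} (z : Plane) : (kochF l 0 z) 0 = l * z 0 := by simp [kochF]
theorem F0_1 {l : ℝ} (z : Plane) : (kochF l 0 z) 1 = l * z 1 := by simp [kochF]
theorem F3_0 {l : ℝ} (z : Plane) : (kochF l 3 z) 0 = l * z 0 + (1 - l) := by simp [kochF, pt_zero]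
theorem F3_1 {l : ℝ} (z : Plane) : (kochF l 3 z) 1 = l * z 1 := by simp [kochF, pt_one]
theorem F1_0 {l h : ℝ} (c : Ctx l h) (z : Plane) : (kochF l 1 z) 0 = (1/2 - l) * z 0 - h * z 1 + l := by
  have : l ≠ 0 := by linarith [c.hl1]
  simp [kochF, pt_zero, rot, ctx_cos c, ctx_sin c]
  field_simp
theorem F1_1 {l h : ℝ} (c : Ctx l h) (z : Plane) : (kochF l 1 z) 1 = h * z 0 + (1/2 - l) * z 1 := by
  have : l ≠ 0 := by linarith [c.hl1]
  simp [kochF, pt_one, rot, ctx_cos c, ctx_sin c]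
  field_simp
theorem F2_0 {l h : ℝ} (c : Ctx l h) (z : Plane) : (kochF l 2 z) 0 = (1/2 - l) * z 0 + h * z 1 + 1/2 := by
  have : l ≠ 0 := by linarith [c.hl1]
  simp [kochF, pt_zero, rot, ctx_cos c, ctx_sin c]
  field_simp
theorem F2_1 {l h : ℝ} (c : Ctx l h) (z : Plane) : (kochF l 2 z) 1 = - h * z 0 + (1/2 - l) * z 1 + h := by
  have : l ≠ 0 := by linarith [c.hl1]
  have e := c.hdef
  simp [kochF, pt_one, rot, ctx_cos c, ctx_sin c]
  rw [show (4:ℝ)⁻¹ = 1/4 by norm_num, ← e]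
  field_simp

theorem G0 (z : Plane) : kochG 0 z = z := by simp [kochG]
theorem cos23 : Real.cos (2 * Real.pi / 3) = -1/2 := by
  rw [show 2 * Real.pi / 3 = Real.pi - Real.pi/3 by ring, Real.cos_pi_sub, Real.cos_pi_div_three]
  norm_num
theorem sin23 : Real.sin (2 * Real.pi / 3) = Real.sqrt 3 / 2 := by
  rw [show 2 * Real.pi / 3 = Real.pi - Real.pi/3 by ring, Real.sin_pi_sub, Real.sin_pi_div_three]

theorem G1_0 (z : Plane) : (kochG 1 z) 0 = - z 0 / 2 + Real.sqrt 3 / 2 * z 1 + 1 := by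
  simp [kochG, rot, pt_zero, cos23, sin23]; ring
theorem G1_1 (z : Plane) : (kochG 1 z) 1 = - Real.sqrt 3 / 2 * z 0 - z 1 / 2 := by
  simp [kochG, rot, pt_one, cos23, sin23]; ring
theorem G2_0 (z : Plane) : (kochG 2 z) 0 = - z 0 / 2 - Real.sqrt 3 / 2 * z 1 + 1/2 := by
  simp [kochG, rot, pt_zero, cos23, sin23]; ring
theorem G2_1 (z : Plane) :
    (kochG 2 z) 1 = Real.sqrt 3 / 2 * z 0 - z 1 / 2 - Real.sqrt 3 / 2 := by
  simp [kochG, rot, pt_one, cos23, sin23]; ring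

theorem F_dist {l h : ℝ} (c : Ctx l h) (i : Fin 4) (z w : Plane) :
    dist (kochF l i z) (kochF l i w) = l * dist z w := by
  have hl : 0 ≤ l := by linarith [c.hl1]
  rw [plane_dist, plane_dist]
  rw [← Real.sqrt_sq hl, ← Real.sqrt_mul (sq_nonneg l), Real.sqrt_sq hl]
  congr 1
  fin_cases i
  · simp [F0_0, F0_1]; ring
  · simp [F1_0 c, F1_1 c]
    linear_combination ((z 0 - w 0)^2+(z 1 - w 1)^2) * c.hh
  · simp [F2_0 c, F2_1 c]
    linear_combination ((z 0 - w 0)^2+(z 1 - w 1)^2) * c.hh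
  · simp [F3_0, F3_1]; ring

theorem F_cont {l h : ℝ} (c : Ctx l h) (i : Fin 4) : Continuous (kochF l i) := by
  have : LipschitzWith ⟨l, by linarith [c.hl1]⟩ (kochF l i) :=
    LipschitzWith.of_dist_le_mul (fun z w => (F_dist c i z w).le)
  exact this.continuous

theorem F_inj {l h : ℝ} (c : Ctx l h) (i : Fin 4) {z w : Plane}
    (e : kochF l i z = kochF l i w) : z = w := by
  have := F_dist c i z w
  rw [e, dist_self] at this
  have h1 := c.hl1
  have : dist z w = 0 := by nlinarith
  exact dist_eq_zero.1 this

theorem sq3 : Real.sqrt 3 ^ 2 = 3 := Real.sq_sqrt (by norm_num)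
theorem sq3p : 0 < Real.sqrt 3 := Real.sqrt_pos.2 (by norm_num)

theorem G_dist (i : Fin 3) (z w : Plane) : dist (kochG i z) (kochG i w) = dist z w := by
  rw [plane_dist, plane_dist]
  congr 1
  fin_cases i
  · simp [G0]
  · simp [G1_0, G1_1]
    linear_combination (((z 0 - w 0)^2+(z 1 - w 1)^2)/4) * sq3
  · simp [G2_0, G2_1]
    linear_combination (((z 0 - w 0)^2+(z 1 - w 1)^2)/4) * sq3

theorem G_cont (i : Fin 3) : Continuous (kochG i) :=
  (Isometry.of_dist_eq (G_dist i)).continuous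

theorem G12 (z : Plane) : kochG 1 (kochG 2 z) = z := by
  apply plane_ext
  · rw [G1_0, G2_0, G2_1]; linear_combination (z 0/4-1/4) * sq3
  · rw [G1_1, G2_0, G2_1]; linear_combination (z 1/4) * sq3
theorem G21 (z : Plane) : kochG 2 (kochG 1 z) = z := by
  apply plane_ext
  · rw [G2_0, G1_0, G1_1]; linear_combination (z 0/4) * sq3
  · rw [G2_1, G1_0, G1_1]; linear_combination (z 1/4) * sq3
theorem G11 (z : Plane) : kochG 1 (kochG 1 z) = kochG 2 z := by
  apply plane_ext
  · rw [G2_0, G1_0, G1_0, G1_1]; linear_combination (-z 0/4) * sq3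
  · rw [G2_1, G1_1, G1_0, G1_1]; linear_combination (-z 1/4) * sq3
theorem G22 (z : Plane) : kochG 2 (kochG 2 z) = kochG 1 z := by
  rw [← G11, G12]

def HT (h : ℝ) : Set Plane := {z | 0 ≤ z 1 ∧ z 1 ≤ 2*h*z 0 ∧ z 1 ≤ 2*h*(1 - z 0)}

theorem HT_x {l h : ℝ} (c : Ctx l h) {z : Plane} (hz : z ∈ HT h) : 0 ≤ z 0 ∧ z 0 ≤ 1 := by
  obtain ⟨a, b, d⟩ := hz
  have := c.hpos
  constructor
  · by_contra hc
    push Not at hc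
    nlinarith
  · by_contra hc
    push Not at hc
    nlinarith

/-! Affine functionals pulled back along the maps. -/

theorem e1_F0 {l : ℝ} (h : ℝ) (z : Plane) :
    (kochF l 0 z) 1 - 2*h*(l - (kochF l 0 z) 0) = l*(z 1 - 2*h*(1 - z 0)) := by
  rw [F0_0, F0_1]; ring
theorem e1'_F3 {l : ℝ} (h : ℝ) (z : Plane) :
    (kochF l 3 z) 1 - 2*h*((kochF l 3 z) 0 - (1 - l)) = l*(z 1 - 2*h*z 0) := by
  rw [F3_0, F3_1]; ring
theorem r1_F1 {l h : ℝ} (c : Ctx l h) (z : Plane) :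
    h * ((kochF l 1 z) 0 - l) - (1/2 - l) * (kochF l 1 z) 1 = - l^2 * z 1 := by
  rw [F1_0 c, F1_1 c]; linear_combination (-z 1) * c.hh
theorem e2_F1 {l h : ℝ} (c : Ctx l h) (z : Plane) :
    (1/2 - 3*l/2) * (kochF l 1 z) 1 + h*(1 - l)*(l - (kochF l 1 z) 0)
      = l^2/2 * (z 1 - 2*h*z 0) := by
  rw [F1_0 c, F1_1 c]; linear_combination ((1-l)* z 1) * c.hh
theorem gL_F1 {l h : ℝ} (c : Ctx l h) (z : Plane) :
    2*h*(kochF l 1 z) 0 - (kochF l 1 z) 1 = l*(2*h*(1 - z 0) - z 1) := by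
  rw [F1_0 c, F1_1 c]; linear_combination (-2*z 1) * c.hh
theorem gR_F1 {l h : ℝ} (c : Ctx l h) (z : Plane) :
    2*h*(1 - (kochF l 1 z) 0) - (kochF l 1 z) 1 = 2*h*(1-l)*(1 - z 0) + (3*l-1)*z 1 := by
  rw [F1_0 c, F1_1 c]; linear_combination (2*z 1) * c.hh
theorem e1_F1 {l h : ℝ} (c : Ctx l h) (z : Plane) :
    (kochF l 1 z) 1 - 2*h*(l - (kochF l 1 z) 0) = 2*h*(1-l)*z 0 - (3*l-1)*z 1 := by
  rw [F1_0 c, F1_1 c]; linear_combination (-2*z 1) * c.hh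
theorem r2_F2 {l h : ℝ} (c : Ctx l h) (z : Plane) :
    h * (1 - l - (kochF l 2 z) 0) - (1/2 - l) * (kochF l 2 z) 1 = - l^2 * z 1 := by
  rw [F2_0 c, F2_1 c]; linear_combination (-z 1) * c.hh
theorem e2'_F2 {l h : ℝ} (c : Ctx l h) (z : Plane) :
    (1/2 - 3*l/2) * (kochF l 2 z) 1 + h*(1 - l)*((kochF l 2 z) 0 - (1 - l))
      = l^2/2 * (z 1 - 2*h*(1 - z 0)) := by
  rw [F2_0 c, F2_1 c]; linear_combination ((1-l)* z 1) * c.hh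
theorem gR_F2 {l h : ℝ} (c : Ctx l h) (z : Plane) :
    2*h*(1 - (kochF l 2 z) 0) - (kochF l 2 z) 1 = l*(2*h*z 0 - z 1) := by
  rw [F2_0 c, F2_1 c]; linear_combination (-2*z 1) * c.hh
theorem gL_F2 {l h : ℝ} (c : Ctx l h) (z : Plane) :
    2*h*(kochF l 2 z) 0 - (kochF l 2 z) 1 = 2*h*(1-l)*z 0 + (3*l-1)*z 1 := by
  rw [F2_0 c, F2_1 c]; linear_combination (2*z 1) * c.hh
theorem e1'_F2 {l h : ℝ} (c : Ctx l h) (z : Plane) :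
    (kochF l 2 z) 1 - 2*h*((kochF l 2 z) 0 - (1 - l)) = 2*h*(1-l)*(1 - z 0) - (3*l-1)*z 1 := by
  rw [F2_0 c, F2_1 c]; linear_combination (-2*z 1) * c.hh

theorem F_surj {l h : ℝ} (c : Ctx l h) (i : Fin 4) (w : Plane) : ∃ z, kochF l i z = w := by
  have hl : l ≠ 0 := by linarith [c.hl1]
  fin_cases i
  · refine ⟨pt (w 0 / l) (w 1 / l), plane_ext ?_ ?_⟩
    · simp only [Fin.zero_eta, Fin.isValue, F0_0, pt_zero]; field_simp
    · simp only [Fin.zero_eta, Fin.isValue, F0_1, pt_one]; field_simp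
  · refine ⟨pt (((1/2-l)*(w 0 - l) + h*w 1)/l^2) ((-h*(w 0 - l) + (1/2-l)*w 1)/l^2), plane_ext ?_ ?_⟩
    · simp only [Fin.mk_one, Fin.isValue, F1_0 c, pt_zero, pt_one]; field_simp
      linear_combination 4 * (w 0 - l) * c.hh
    · simp only [Fin.mk_one, Fin.isValue, F1_1 c, pt_zero, pt_one]; field_simp
      linear_combination 4 * w 1 * c.hh
  · refine ⟨pt (((1/2-l)*(w 0 - 1/2) - h*(w 1-h))/l^2) ((h*(w 0 - 1/2) + (1/2-l)*(w 1 - h))/l^2),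
      plane_ext ?_ ?_⟩
    · simp only [Fin.reduceFinMk, Fin.isValue, F2_0 c, pt_zero, pt_one]; field_simp
      linear_combination 4 * (2*w 0 - 1) * c.hh
    · simp only [Fin.reduceFinMk, Fin.isValue, F2_1 c, pt_zero, pt_one]; field_simp
      linear_combination 4 * (w 1 - h) * c.hh
  · refine ⟨pt ((w 0 - (1-l)) / l) (w 1 / l), plane_ext ?_ ?_⟩
    · simp only [Fin.reduceFinMk, Fin.isValue, F3_0, pt_zero]; field_simp; ring
    · simp only [Fin.reduceFinMk, Fin.isValue, F3_1, pt_one]; field_simp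

theorem F_HT {l h : ℝ} (c : Ctx l h) (i : Fin 4) {z : Plane} (hz : z ∈ HT h) :
    kochF l i z ∈ HT h := by
  obtain ⟨x0, x1⟩ := HT_x c hz
  obtain ⟨a, b, d⟩ := hz
  have h1 := c.hl1
  have h2 := c.hl2
  have hp := c.hpos
  have hlp : 0 < l := by linarith
  fin_cases i
  · simp only [Fin.zero_eta, Fin.isValue]
    refine ⟨?_, ?_, ?_⟩
    · rw [F0_1]; positivity
    · rw [F0_1, F0_0]; nlinarith
    · rw [F0_1, F0_0]; nlinarith
  · simp only [Fin.mk_one, Fin.isValue]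
    refine ⟨?_, ?_, ?_⟩
    · rw [F1_1 c]
      have : 0 ≤ h * z 0 := by positivity
      have : 0 ≤ (1/2 - l) * z 1 := mul_nonneg (by linarith) a
      linarith
    · have := gL_F1 c z
      have : 0 ≤ l*(2*h*(1 - z 0) - z 1) := mul_nonneg hlp.le (by linarith)
      linarith
    · have := gR_F1 c z
      have : 0 ≤ 2*h*(1-l)*(1 - z 0) :=
        mul_nonneg (mul_nonneg (by linarith) (by linarith)) (by linarith)
      have : 0 ≤ (3*l-1)*z 1 := mul_nonneg (by linarith) a
      linarith
  · simp only [Fin.reduceFinMk, Fin.isValue]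
    refine ⟨?_, ?_, ?_⟩
    · rw [F2_1 c]
      have : 0 ≤ h * (1 - z 0) := mul_nonneg hp.le (by linarith)
      have : 0 ≤ (1/2 - l) * z 1 := mul_nonneg (by linarith) a
      linarith
    · have := gL_F2 c z
      have : 0 ≤ 2*h*(1-l)*z 0 :=
        mul_nonneg (mul_nonneg (by linarith) (by linarith)) (by linarith)
      have : 0 ≤ (3*l-1)*z 1 := mul_nonneg (by linarith) a
      linarith
    · have := gR_F2 c z
      have : 0 ≤ l*(2*h*z 0 - z 1) := mul_nonneg hlp.le (by linarith)
      linarith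
  · simp only [Fin.reduceFinMk, Fin.isValue]
    refine ⟨?_, ?_, ?_⟩
    · rw [F3_1]; positivity
    · rw [F3_1, F3_0]; nlinarith
    · rw [F3_1, F3_0]; nlinarith

theorem fact0 {l h : ℝ} (c : Ctx l h) {z : Plane} (hz : z ∈ HT h) :
    (kochF l 0 z) 0 ≤ l ∧ (kochF l 0 z) 1 - 2*h*(l - (kochF l 0 z) 0) ≤ 0 := by
  have h1 := c.hl1
  obtain ⟨x0, x1⟩ := HT_x c hz
  obtain ⟨a, b, d⟩ := hz
  constructor
  · rw [F0_0]; nlinarith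
  · rw [e1_F0]; exact mul_nonpos_of_nonneg_of_nonpos (by linarith) (by linarith)

theorem fact3 {l h : ℝ} (c : Ctx l h) {z : Plane} (hz : z ∈ HT h) :
    1 - l ≤ (kochF l 3 z) 0 ∧ (kochF l 3 z) 1 - 2*h*((kochF l 3 z) 0 - (1 - l)) ≤ 0 := by
  have h1 := c.hl1
  obtain ⟨x0, x1⟩ := HT_x c hz
  obtain ⟨a, b, d⟩ := hz
  constructor
  · rw [F3_0]; nlinarith
  · rw [e1'_F3]; exact mul_nonpos_of_nonneg_of_nonpos (by linarith) (by linarith)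

theorem fact1 {l h : ℝ} (c : Ctx l h) {z : Plane} (hz : z ∈ HT h) :
    ((kochF l 1 z) 0 ≤ 1/2) ∧ (1/2 ≤ (kochF l 1 z) 0 → z = pt 1 0) ∧
    (0 ≤ (kochF l 1 z) 1 - 2*h*(l - (kochF l 1 z) 0)) ∧
    ((kochF l 1 z) 1 - 2*h*(l - (kochF l 1 z) 0) ≤ 0 → z = pt 0 0) ∧
    (h * ((kochF l 1 z) 0 - l) - (1/2 - l) * (kochF l 1 z) 1 ≤ 0) ∧
    ((1/2 - 3*l/2) * (kochF l 1 z) 1 + h*(1 - l)*(l - (kochF l 1 z) 0) ≤ 0) := by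
  have h1 := c.hl1
  have h2 := c.hl2
  have hp := c.hpos
  obtain ⟨x0, x1⟩ := HT_x c hz
  obtain ⟨a, b, d⟩ := hz
  have k1 : 0 ≤ (1/2 - l) * (1 - z 0) := mul_nonneg (by linarith) (by linarith)
  have k2 : 0 ≤ h * z 1 := by positivity
  have k3 : (3*l-1) * z 1 ≤ (3*l-1)*(2*h*z 0) := mul_le_mul_of_nonneg_left b (by linarith)
  have k4 : 0 ≤ 2*h*z 0*(2-4*l) := mul_nonneg (by positivity) (by linarith)
  refine ⟨?_, ?_, ?_, ?_, ?_, ?_⟩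
  · rw [F1_0 c]; linarith
  · rw [F1_0 c]; intro hx
    have e1 : (1/2 - l) * (1 - z 0) = 0 := by linarith
    have e2 : h * z 1 = 0 := by linarith
    have e3 : 1 - z 0 = 0 := (mul_eq_zero.1 e1).resolve_left (by linarith)
    have e4 : z 1 = 0 := (mul_eq_zero.1 e2).resolve_left (by linarith)
    exact plane_ext (by rw [pt_zero]; linarith) (by rw [pt_one]; linarith)
  · rw [e1_F1 c]; linarith
  · rw [e1_F1 c]; intro hx
    have e1 : 2*h*z 0*(2-4*l) = 0 := by linarith
    have e2 : 2*h*z 0 = 0 := (mul_eq_zero.1 e1).resolve_right (by linarith)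
    have e3 : z 0 = 0 := (mul_eq_zero.1 e2).resolve_left (by linarith)
    exact plane_ext (by rw [pt_zero]; linarith) (by rw [pt_one]; linarith)
  · rw [r1_F1 c]
    have : 0 ≤ l^2 * z 1 := by positivity
    linarith
  · rw [e2_F1 c]; exact mul_nonpos_of_nonneg_of_nonpos (by positivity) (by linarith)

theorem fact2 {l h : ℝ} (c : Ctx l h) {z : Plane} (hz : z ∈ HT h) :
    (1/2 ≤ (kochF l 2 z) 0) ∧ ((kochF l 2 z) 0 ≤ 1/2 → z = pt 0 0) ∧
    (0 ≤ (kochF l 2 z) 1 - 2*h*((kochF l 2 z) 0 - (1 - l))) ∧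
    ((kochF l 2 z) 1 - 2*h*((kochF l 2 z) 0 - (1 - l)) ≤ 0 → z = pt 1 0) ∧
    (h * (1 - l - (kochF l 2 z) 0) - (1/2 - l) * (kochF l 2 z) 1 ≤ 0) ∧
    ((1/2 - 3*l/2) * (kochF l 2 z) 1 + h*(1 - l)*((kochF l 2 z) 0 - (1 - l)) ≤ 0) := by
  have h1 := c.hl1
  have h2 := c.hl2
  have hp := c.hpos
  obtain ⟨x0, x1⟩ := HT_x c hz
  obtain ⟨a, b, d⟩ := hz
  have k1 : 0 ≤ (1/2 - l) * z 0 := mul_nonneg (by linarith) (by linarith)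
  have k2 : 0 ≤ h * z 1 := by positivity
  have k3 : (3*l-1) * z 1 ≤ (3*l-1)*(2*h*(1-z 0)) := mul_le_mul_of_nonneg_left d (by linarith)
  have k4 : 0 ≤ 2*h*(1-z 0)*(2-4*l) :=
    mul_nonneg (mul_nonneg (by linarith) (by linarith)) (by linarith)
  refine ⟨?_, ?_, ?_, ?_, ?_, ?_⟩
  · rw [F2_0 c]; linarith
  · rw [F2_0 c]; intro hx
    have e1 : (1/2 - l) * z 0 = 0 := by linarith
    have e2 : h * z 1 = 0 := by linarith
    have e3 : z 0 = 0 := (mul_eq_zero.1 e1).resolve_left (by linarith)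
    have e4 : z 1 = 0 := (mul_eq_zero.1 e2).resolve_left (by linarith)
    exact plane_ext (by rw [pt_zero]; linarith) (by rw [pt_one]; linarith)
  · rw [e1'_F2 c]; linarith
  · rw [e1'_F2 c]; intro hx
    have e1 : 2*h*(1-z 0)*(2-4*l) = 0 := by linarith
    have e2 : 2*h*(1-z 0) = 0 := (mul_eq_zero.1 e1).resolve_right (by linarith)
    have e3 : 1-z 0 = 0 := (mul_eq_zero.1 e2).resolve_left (by linarith)
    have e4 : z 1 ≤ 0 := by rw [e3] at d; linarith
    exact plane_ext (by rw [pt_zero]; linarith) (by rw [pt_one]; linarith)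
  · rw [r2_F2 c]
    have : 0 ≤ l^2 * z 1 := by positivity
    linarith
  · rw [e2'_F2 c]; exact mul_nonpos_of_nonneg_of_nonpos (by positivity) (by linarith)

structure KC (l h : ℝ) (K : Set Plane) : Prop where
  c : Ctx l h
  ne : K.Nonempty
  cpt : IsCompact K
  fwd : ∀ i : Fin 4, ∀ z ∈ K, kochF l i z ∈ K
  bwd : ∀ z ∈ K, ∃ i : Fin 4, ∃ w ∈ K, kochF l i w = z

theorem HT_closed (h : ℝ) : IsClosed (HT h) := by
  unfold HT
  simp only [Set.ofPred_and]
  refine IsClosed.inter ?_ (IsClosed.inter ?_ ?_)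
  · exact isClosed_le (by fun_prop) (by fun_prop)
  · exact isClosed_le (by fun_prop) (by fun_prop)
  · exact isClosed_le (by fun_prop) (by fun_prop)

theorem HT_ne {l h : ℝ} (c : Ctx l h) : (HT h).Nonempty := by
  refine ⟨pt 0 0, ?_⟩
  have := c.hpos
  refine ⟨?_, ?_, ?_⟩ <;> simp [pt_zero, pt_one]
  linarith

theorem infDist_F {l h : ℝ} (c : Ctx l h) (i : Fin 4) {A : Set Plane} (hA : A.Nonempty)
    (hf : ∀ z ∈ A, kochF l i z ∈ A) (z : Plane) :
    infDist (kochF l i z) A ≤ l * infDist z A := by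
  have hlp : 0 < l := by linarith [c.hl1]
  have : infDist (kochF l i z) A / l ≤ infDist z A := by
    rw [Metric.le_infDist hA]
    intro y hy
    rw [div_le_iff₀ hlp]
    calc _ ≤ dist (kochF l i z) (kochF l i y) := infDist_le_dist_of_mem (hf y hy)
      _ = _ := by rw [F_dist c]; ring
  rw [div_le_iff₀ hlp] at this
  linarith

theorem KC.sub_HT {l h : ℝ} {K : Set Plane} (k : KC l h K) : K ⊆ HT h := by
  obtain ⟨m, hm, hmax⟩ := k.cpt.exists_isMaxOn k.ne
    (f := fun z => infDist z (HT h)) (continuous_infDist_pt _).continuousOn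
  obtain ⟨i, w, hw, rfl⟩ := k.bwd m hm
  have h1 := infDist_F k.c i (HT_ne k.c) (fun z hz => F_HT k.c i hz) w
  have h2 : infDist w (HT h) ≤ infDist (kochF l i w) (HT h) := hmax hw
  have h3 := k.c.hl1
  have h4 := k.c.hl2
  have h5 : 0 ≤ infDist w (HT h) := infDist_nonneg
  have h6 : infDist w (HT h) = 0 := by nlinarith
  rw [h6] at h1
  intro z hz
  rw [(HT_closed h).mem_iff_infDist_zero (HT_ne k.c)]
  have h7 : infDist z (HT h) ≤ infDist (kochF l i w) (HT h) := hmax hz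
  have h8 : 0 ≤ infDist z (HT h) := infDist_nonneg
  linarith

theorem KC.fix {l h : ℝ} {K : Set Plane} (k : KC l h K) (i : Fin 4) {p : Plane}
    (hp : kochF l i p = p) : p ∈ K := by
  have h1 := infDist_F k.c i k.ne (k.fwd i) p
  rw [hp] at h1
  have h4 := k.c.hl2
  have h5 : 0 ≤ infDist p K := infDist_nonneg
  rw [k.cpt.isClosed.mem_iff_infDist_zero k.ne]
  nlinarith

theorem KC.v0 {l h : ℝ} {K : Set Plane} (k : KC l h K) : pt 0 0 ∈ K :=
  k.fix 0 (plane_ext (by simp [F0_0, pt_zero]) (by simp [F0_1, pt_one]))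
theorem KC.v1 {l h : ℝ} {K : Set Plane} (k : KC l h K) : pt 1 0 ∈ K :=
  k.fix 3 (plane_ext (by simp [F3_0, pt_zero]) (by simp [F3_1, pt_one]))

theorem F01 {l h : ℝ} (c : Ctx l h) : kochF l 1 (pt 0 0) = kochF l 0 (pt 1 0) :=
  plane_ext (by simp [F1_0 c, F0_0, pt_zero, pt_one]) (by simp [F1_1 c, F0_1, pt_zero, pt_one])
theorem F12 {l h : ℝ} (c : Ctx l h) : kochF l 1 (pt 1 0) = kochF l 2 (pt 0 0) :=
  plane_ext (by simp [F1_0 c, F2_0 c, pt_zero, pt_one]) (by simp [F1_1 c, F2_1 c, pt_zero, pt_one])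
theorem F23 {l h : ℝ} (c : Ctx l h) : kochF l 2 (pt 1 0) = kochF l 3 (pt 0 0) :=
  plane_ext (by simp [F2_0 c, F3_0, pt_zero, pt_one]; ring)
    (by simp [F2_1 c, F3_1, pt_zero, pt_one])

theorem KC.F_not {l h : ℝ} {K : Set Plane} (k : KC l h K) (i : Fin 4) {z : Plane}
    (hz : z ∈ HT h) (hzK : z ∉ K) : kochF l i z ∉ K := by
  intro hK
  obtain ⟨j, w, hw, e⟩ := k.bwd _ hK
  have c := k.c
  have h1 := c.hl1
  have h2 := c.hl2
  have hwH := k.sub_HT hw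
  have a0 := fact0 c hz
  have a1 := fact1 c hz
  have a2 := fact2 c hz
  have a3 := fact3 c hz
  have b0 := fact0 c hwH
  have b1 := fact1 c hwH
  have b2 := fact2 c hwH
  have b3 := fact3 c hwH
  have same : ∀ i : Fin 4, kochF l i w = kochF l i z → False := fun i e => by
    rw [F_inj c i e] at hw; exact hzK hw
  have n0 : z ≠ pt 0 0 := fun e => hzK (e ▸ k.v0)
  have n1 : z ≠ pt 1 0 := fun e => hzK (e ▸ k.v1)
  fin_cases i <;> fin_cases j <;>
    simp only [Fin.zero_eta, Fin.mk_one, Fin.reduceFinMk, Fin.isValue] at e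
  · exact same _ e
  · rw [e] at b1
    have := b1.2.2.2.1 a0.2
    rw [this, F01 c] at e
    exact n1 (F_inj c _ e).symm
  · rw [e] at b2; linarith [b2.1, a0.1]
  · rw [e] at b3; linarith [b3.1, a0.1]
  · rw [e] at b0
    exact n0 (a1.2.2.2.1 b0.2)
  · exact same _ e
  · rw [e] at b2
    exact n1 (a1.2.1 b2.1)
  · rw [e] at b3; linarith [b3.1, a1.1]
  · rw [e] at b0; linarith [b0.1, a2.1]
  · rw [e] at b1; exact n0 (a2.2.1 b1.1)
  · exact same _ e
  · rw [e] at b3; exact n1 (a2.2.2.2.1 b3.2)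
  · rw [e] at b0; linarith [b0.1, a3.1]
  · rw [e] at b1; linarith [b1.1, a3.1]
  · rw [e] at b2
    have := b2.2.2.2.1 a3.2
    rw [this, F23 c] at e
    exact n0 (F_inj c _ e).symm
  · exact same _ e

theorem KC.cases {l h : ℝ} {K : Set Plane} (k : KC l h K) {w : Plane} (hw : w ∈ K) :
    (w 0 ≤ l ∧ w 1 - 2*h*(l - w 0) ≤ 0) ∨
    (w 0 ≤ 1/2 ∧ h * (w 0 - l) - (1/2 - l) * w 1 ≤ 0 ∧
      (1/2 - 3*l/2) * w 1 + h*(1 - l)*(l - w 0) ≤ 0) ∨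
    (1/2 ≤ w 0 ∧ h * (1 - l - w 0) - (1/2 - l) * w 1 ≤ 0 ∧
      (1/2 - 3*l/2) * w 1 + h*(1 - l)*(w 0 - (1 - l)) ≤ 0) ∨
    (1 - l ≤ w 0 ∧ w 1 - 2*h*(w 0 - (1 - l)) ≤ 0) := by
  obtain ⟨i, z, hz, rfl⟩ := k.bwd w hw
  have hzH := k.sub_HT hz
  fin_cases i
  · exact Or.inl (fact0 k.c hzH)
  · have := fact1 k.c hzH
    exact Or.inr (Or.inl ⟨this.1, this.2.2.2.2⟩)
  · have := fact2 k.c hzH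
    exact Or.inr (Or.inr (Or.inl ⟨this.1, this.2.2.2.2⟩))
  · exact Or.inr (Or.inr (Or.inr (fact3 k.c hzH)))

theorem KC.notXL {l h : ℝ} {K : Set Plane} (k : KC l h K) {w : Plane} (h0 : 0 ≤ w 1)
    (h1 : 0 < w 1 - 2*h*(l - w 0))
    (h2 : 0 < (1/2 - 3*l/2) * w 1 + h*(1 - l)*(l - w 0)) : w ∉ K := by
  intro hw
  have l1 := k.c.hl1
  have l2 := k.c.hl2
  have hp := k.c.hpos
  have a : 0 ≤ (3*l/2 - 1/2) * w 1 := mul_nonneg (by linarith) h0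
  have b : 0 < h*(1 - l)*(l - w 0) := by linarith
  have d : 0 < l - w 0 := pos_of_mul_pos_right b (mul_nonneg hp.le (by linarith))
  rcases k.cases hw with q | q | q | q
  · linarith [q.2]
  · linarith [q.2.2]
  · linarith [q.1]
  · linarith [q.1]

theorem KC.notXR {l h : ℝ} {K : Set Plane} (k : KC l h K) {w : Plane} (h0 : 0 ≤ w 1)
    (h1 : 0 < w 1 - 2*h*(w 0 - (1 - l)))
    (h2 : 0 < (1/2 - 3*l/2) * w 1 + h*(1 - l)*(w 0 - (1 - l))) : w ∉ K := by
  intro hw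
  have l1 := k.c.hl1
  have l2 := k.c.hl2
  have hp := k.c.hpos
  have a : 0 ≤ (3*l/2 - 1/2) * w 1 := mul_nonneg (by linarith) h0
  have b : 0 < h*(1 - l)*(w 0 - (1 - l)) := by linarith
  have d : 0 < w 0 - (1 - l) := pos_of_mul_pos_right b (mul_nonneg hp.le (by linarith))
  rcases k.cases hw with q | q | q | q
  · linarith [q.1]
  · linarith [q.1]
  · linarith [q.2.2]
  · linarith [q.2]

theorem KC.notT {l h : ℝ} {K : Set Plane} (k : KC l h K) {w : Plane} (h0 : 0 ≤ w 1)
    (h1 : 0 < h * (w 0 - l) - (1/2 - l) * w 1)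
    (h2 : 0 < h * (1 - l - w 0) - (1/2 - l) * w 1) : w ∉ K := by
  intro hw
  have l1 := k.c.hl1
  have l2 := k.c.hl2
  have hp := k.c.hpos
  have a : 0 ≤ (1/2 - l) * w 1 := mul_nonneg (by linarith) h0
  have d : 0 < w 0 - l := pos_of_mul_pos_right (by linarith : 0 < h * (w 0 - l)) hp.le
  have d' : 0 < 1 - l - w 0 := pos_of_mul_pos_right (by linarith : 0 < h * (1 - l - w 0)) hp.le
  rcases k.cases hw with q | q | q | q
  · linarith [q.1]
  · linarith [q.2.1]
  · linarith [q.2.1]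
  · linarith [q.1]

theorem seg_join {S : Set Plane} {p q : Plane} (hp : p ∈ S)
    (H : ∀ x : Plane, ∀ t : ℝ, 0 < t → t ≤ 1 → x 0 = (1 - t) * p 0 + t * q 0 →
      x 1 = (1 - t) * p 1 + t * q 1 → x ∈ S) : JoinedIn S p q := by
  apply JoinedIn.of_segment_subset
  rintro x ⟨a, b, ha, hb, hab, rfl⟩
  rcases eq_or_lt_of_le hb with h0 | h0
  · subst h0
    have : a = 1 := by linarith
    subst this
    simpa using hp
  · have : a = 1 - b := by linarith
    subst this
    exact H _ b h0 (by linarith) (by simp) (by simp)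

theorem lin_pos {t u v : ℝ} (h0 : 0 < t) (h1 : t ≤ 1) (hu : 0 ≤ u) (hv : 0 < v) :
    0 < (1 - t) * u + t * v := by
  have := mul_nonneg (by linarith : 0 ≤ 1 - t) hu
  have := mul_pos h0 hv
  linarith
theorem lin_nn {t u v : ℝ} (h0 : 0 < t) (h1 : t ≤ 1) (hu : 0 ≤ u) (hv : 0 ≤ v) :
    0 ≤ (1 - t) * u + t * v := by
  have := mul_nonneg (by linarith : 0 ≤ 1 - t) hu
  have := mul_nonneg h0.le hv
  linarith

theorem HT_convex {h : ℝ} {p q x : Plane} {t : ℝ} (hp : p ∈ HT h) (hq : q ∈ HT h)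
    (h0 : 0 < t) (h1 : t ≤ 1) (e0 : x 0 = (1 - t) * p 0 + t * q 0)
    (e1 : x 1 = (1 - t) * p 1 + t * q 1) : x ∈ HT h := by
  obtain ⟨p1, p2, p3⟩ := hp
  obtain ⟨q1, q2, q3⟩ := hq
  refine ⟨?_, ?_, ?_⟩
  · have := lin_nn h0 h1 p1 q1
    rw [e1]; exact this
  · have := lin_nn h0 h1 (sub_nonneg.2 p2) (sub_nonneg.2 q2)
    rw [e1, e0]; linarith
  · have := lin_nn h0 h1 (sub_nonneg.2 p3) (sub_nonneg.2 q3)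
    rw [e1, e0]; linarith

theorem KC.joinXL {l h : ℝ} {K : Set Plane} (k : KC l h K) {p : Plane} (hp : p ∈ HT h)
    (hpK : p ∉ K) (a : 0 ≤ p 1 - 2*h*(l - p 0))
    (b : 0 ≤ (1/2 - 3*l/2) * p 1 + h*(1 - l)*(l - p 0)) :
    JoinedIn (HT h \ K) p (pt (1/4) (h/2)) := by
  have l1 := k.c.hl1
  have l2 := k.c.hl2
  have hpos := k.c.hpos
  have hq : pt (1/4) (h/2) ∈ HT h := by
    refine ⟨?_, ?_, ?_⟩ <;> simp only [pt_zero, pt_one] <;> linarith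
  have a' : 0 < h/2 - 2*h*(l - 1/4) := by
    have : 0 < h * (1 - 2*l) := mul_pos hpos (by linarith)
    linarith
  have b' : 0 < (1/2 - 3*l/2) * (h/2) + h*(1 - l)*(l - 1/4) := by
    have : 0 < h * l * (1 - 2*l) := mul_pos (by positivity) (by linarith)
    linarith
  refine seg_join ⟨hp, hpK⟩ ?_
  intro x t t0 t1 e0 e1
  have hx := HT_convex hp hq t0 t1 e0 e1
  refine ⟨hx, k.notXL hx.1 ?_ ?_⟩
  · have := lin_pos t0 t1 a a'
    rw [e1, e0, pt_zero, pt_one]; linarith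
  · have := lin_pos t0 t1 b b'
    rw [e1, e0, pt_zero, pt_one]; linarith

theorem KC.joinXR {l h : ℝ} {K : Set Plane} (k : KC l h K) {p : Plane} (hp : p ∈ HT h)
    (hpK : p ∉ K) (a : 0 ≤ p 1 - 2*h*(p 0 - (1 - l)))
    (b : 0 ≤ (1/2 - 3*l/2) * p 1 + h*(1 - l)*(p 0 - (1 - l))) :
    JoinedIn (HT h \ K) p (pt (3/4) (h/2)) := by
  have l1 := k.c.hl1
  have l2 := k.c.hl2
  have hpos := k.c.hpos
  have hq : pt (3/4) (h/2) ∈ HT h := by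
    refine ⟨?_, ?_, ?_⟩ <;> simp only [pt_zero, pt_one] <;> linarith
  have a' : 0 < h/2 - 2*h*(3/4 - (1 - l)) := by
    have : 0 < h * (1 - 2*l) := mul_pos hpos (by linarith)
    linarith
  have b' : 0 < (1/2 - 3*l/2) * (h/2) + h*(1 - l)*(3/4 - (1 - l)) := by
    have : 0 < h * l * (1 - 2*l) := mul_pos (by positivity) (by linarith)
    linarith
  refine seg_join ⟨hp, hpK⟩ ?_
  intro x t t0 t1 e0 e1
  have hx := HT_convex hp hq t0 t1 e0 e1
  refine ⟨hx, k.notXR hx.1 ?_ ?_⟩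
  · have := lin_pos t0 t1 a a'
    rw [e1, e0, pt_zero, pt_one]; linarith
  · have := lin_pos t0 t1 b b'
    rw [e1, e0, pt_zero, pt_one]; linarith

theorem KC.joinT {l h : ℝ} {K : Set Plane} (k : KC l h K) {p : Plane} (hp : p ∈ HT h)
    (hpK : p ∉ K) (a : 0 ≤ h * (p 0 - l) - (1/2 - l) * p 1)
    (b : 0 ≤ h * (1 - l - p 0) - (1/2 - l) * p 1) :
    JoinedIn (HT h \ K) p (pt (1/2) 0) := by
  have l1 := k.c.hl1
  have l2 := k.c.hl2
  have hpos := k.c.hpos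
  have hq : pt (1/2) 0 ∈ HT h := by
    refine ⟨?_, ?_, ?_⟩ <;> simp only [pt_zero, pt_one] <;> linarith
  have a' : 0 < h * (1/2 - l) - (1/2 - l) * 0 := by
    have : 0 < h * (1/2 - l) := mul_pos hpos (by linarith)
    linarith
  have b' : 0 < h * (1 - l - 1/2) - (1/2 - l) * 0 := by linarith
  refine seg_join ⟨hp, hpK⟩ ?_
  intro x t t0 t1 e0 e1
  have hx := HT_convex hp hq t0 t1 e0 e1
  refine ⟨hx, k.notT hx.1 ?_ ?_⟩
  · have := lin_pos t0 t1 a a'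
    rw [e1, e0, pt_zero, pt_one]; linarith
  · have := lin_pos t0 t1 b b'
    rw [e1, e0, pt_zero, pt_one]; linarith

def Slant (h : ℝ) (w : Plane) : Prop := w 1 = 2*h*w 0 ∨ w 1 = 2*h*(1 - w 0)

def EE (h : ℝ) (K : Set Plane) (z : Plane) : Prop :=
  ∃ w, Slant h w ∧ JoinedIn (HT h \ K) z w
def II (h : ℝ) (K : Set Plane) (z : Plane) : Prop :=
  ∃ w, w 1 = 0 ∧ JoinedIn (HT h \ K) z w

theorem slantL (h : ℝ) : Slant h (pt (1/4) (h/2)) := by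
  left; simp only [pt_zero, pt_one]; ring
theorem slantR (h : ℝ) : Slant h (pt (3/4) (h/2)) := by
  right; simp only [pt_zero, pt_one]; ring

/-- A slant point goes, under each map, to a point connected to a slant point. -/
theorem KC.EE_slant {l h : ℝ} {K : Set Plane} (k : KC l h K) (i : Fin 4) {z : Plane}
    (hz : z ∈ HT h) (hzK : z ∉ K) (hs : Slant h z) : EE h K (kochF l i z) := by
  have hF := F_HT k.c i hz
  have hFK := k.F_not i hz hzK
  have c := k.c
  have l1 := c.hl1
  have l2 := c.hl2
  have hpos := c.hpos
  obtain ⟨x0, x1⟩ := HT_x c hz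
  have direct : Slant h (kochF l i z) → EE h K (kochF l i z) := fun s =>
    ⟨_, s, JoinedIn.refl ⟨hF, hFK⟩⟩
  fin_cases i <;>
    simp only [Fin.zero_eta, Fin.mk_one, Fin.reduceFinMk, Fin.isValue] at *
  · rcases hs with hs | hs
    · apply direct; left; rw [F0_0, F0_1, hs]; ring
    · refine ⟨_, slantL h, k.joinXL hF hFK ?_ ?_⟩
      · rw [e1_F0, hs]; simp
      · rw [F0_0, F0_1, hs]
        have : 0 ≤ h * l * ((1 - z 0) * (2-4*l)) :=
          mul_nonneg (by positivity) (mul_nonneg (by linarith) (by linarith))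
        linarith
  · rcases hs with hs | hs
    · refine ⟨_, slantL h, k.joinXL hF hFK ?_ ?_⟩
      · exact (fact1 c hz).2.2.1
      · rw [e2_F1 c, hs]; simp
    · apply direct; left
      have := gL_F1 c z
      rw [hs] at this
      linarith
  · rcases hs with hs | hs
    · apply direct; right
      have := gR_F2 c z
      rw [hs] at this
      linarith
    · refine ⟨_, slantR h, k.joinXR hF hFK ?_ ?_⟩
      · exact (fact2 c hz).2.2.1
      · rw [e2'_F2 c, hs]; simp
  · rcases hs with hs | hs
    · refine ⟨_, slantR h, k.joinXR hF hFK ?_ ?_⟩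
      · rw [e1'_F3, hs]; simp
      · rw [F3_0, F3_1, hs]
        have : 0 ≤ h * l * (z 0 * (2-4*l)) :=
          mul_nonneg (by positivity) (mul_nonneg (by linarith) (by linarith))
        linarith
    · apply direct; right; rw [F3_0, F3_1, hs]; ring

theorem KC.join_F {l h : ℝ} {K : Set Plane} (k : KC l h K) (i : Fin 4) {z w : Plane}
    (j : JoinedIn (HT h \ K) z w) : JoinedIn (HT h \ K) (kochF l i z) (kochF l i w) := by
  refine (j.map (F_cont k.c i)).mono ?_
  rintro _ ⟨y, hy, rfl⟩
  exact ⟨F_HT k.c i hy.1, k.F_not i hy.1 hy.2⟩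

theorem KC.EE_F {l h : ℝ} {K : Set Plane} (k : KC l h K) (i : Fin 4) {z : Plane}
    (e : EE h K z) : EE h K (kochF l i z) := by
  obtain ⟨w, hw, j⟩ := e
  obtain ⟨v, hv, j'⟩ := k.EE_slant i j.target_mem.1 j.target_mem.2 hw
  exact ⟨v, hv, (k.join_F i j).trans j'⟩

theorem KC.II_base {l h : ℝ} {K : Set Plane} (k : KC l h K) (i : Fin 4) {z : Plane}
    (hz : z ∈ HT h) (hzK : z ∉ K) (hs : z 1 = 0) : II h K (kochF l i z) := by
  have hF := F_HT k.c i hz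
  have hFK := k.F_not i hz hzK
  have c := k.c
  have l1 := c.hl1
  have l2 := c.hl2
  have hpos := c.hpos
  obtain ⟨x0, x1⟩ := HT_x c hz
  have direct : (kochF l i z) 1 = 0 → II h K (kochF l i z) := fun s =>
    ⟨_, s, JoinedIn.refl ⟨hF, hFK⟩⟩
  have P : 0 ≤ h * (1/2 - l) := mul_nonneg (by linarith) (by linarith)
  fin_cases i <;>
    simp only [Fin.zero_eta, Fin.mk_one, Fin.reduceFinMk, Fin.isValue] at *
  · apply direct; rw [F0_1, hs]; ring
  · refine ⟨pt (1/2) 0, pt_one _ _, k.joinT hF hFK ?_ ?_⟩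
    · rw [r1_F1 c, hs]; simp
    · rw [F1_0 c, F1_1 c, hs]
      have := mul_nonneg P (by linarith : 0 ≤ 1 - z 0)
      linarith
  · refine ⟨pt (1/2) 0, pt_one _ _, k.joinT hF hFK ?_ ?_⟩
    · rw [F2_0 c, F2_1 c, hs]
      have := mul_nonneg P x0
      linarith
    · rw [r2_F2 c, hs]; simp
  · apply direct; rw [F3_1, hs]; ring

theorem KC.II_F {l h : ℝ} {K : Set Plane} (k : KC l h K) (i : Fin 4) {z : Plane}
    (e : II h K z) : II h K (kochF l i z) := by
  obtain ⟨w, hw, j⟩ := e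
  obtain ⟨v, hv, j'⟩ := k.II_base i j.target_mem.1 j.target_mem.2 hw
  exact ⟨v, hv, (k.join_F i j).trans j'⟩

theorem KC.decomp {l h : ℝ} {K : Set Plane} (k : KC l h K) {w : Plane} (hw : w ∈ HT h)
    (hwK : w ∉ K) : (∃ i : Fin 4, ∃ z ∈ HT h, kochF l i z = w) ∨ EE h K w ∨ II h K w := by
  have c := k.c
  have l1 := c.hl1
  have l2 := c.hl2
  have hpos := c.hpos
  have hl : 0 < l := by linarith
  obtain ⟨x0, x1⟩ := HT_x c hw
  have hw' := hw
  obtain ⟨a, b, d⟩ := hw'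
  by_cases A : w 1 - 2*h*(l - w 0) ≤ 0
  · left
    obtain ⟨z, rfl⟩ := F_surj c 0 w
    refine ⟨0, z, ⟨?_, ?_, ?_⟩, rfl⟩
    · rw [F0_1] at a
      exact nonneg_of_mul_nonneg_right a hl
    · rw [F0_1, F0_0] at b
      have : 0 ≤ l * (2*h*z 0 - z 1) := by linarith
      linarith [nonneg_of_mul_nonneg_right this hl]
    · rw [e1_F0] at A
      have : 0 ≤ l * (2*h*(1-z 0) - z 1) := by linarith
      linarith [nonneg_of_mul_nonneg_right this hl]
  by_cases A' : w 1 - 2*h*(w 0 - (1 - l)) ≤ 0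
  · left
    obtain ⟨z, rfl⟩ := F_surj c 3 w
    refine ⟨3, z, ⟨?_, ?_, ?_⟩, rfl⟩
    · rw [F3_1] at a
      exact nonneg_of_mul_nonneg_right a hl
    · rw [e1'_F3] at A'
      have : 0 ≤ l * (2*h*z 0 - z 1) := by linarith
      linarith [nonneg_of_mul_nonneg_right this hl]
    · rw [F3_1, F3_0] at d
      have : 0 ≤ l * (2*h*(1-z 0) - z 1) := by linarith
      linarith [nonneg_of_mul_nonneg_right this hl]
  by_cases B : h * (w 0 - l) - (1/2 - l) * w 1 ≤ 0
  · by_cases C : (1/2 - 3*l/2) * w 1 + h*(1 - l)*(l - w 0) ≤ 0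
    · left
      obtain ⟨z, rfl⟩ := F_surj c 1 w
      refine ⟨1, z, ⟨?_, ?_, ?_⟩, rfl⟩
      · rw [r1_F1 c] at B
        exact nonneg_of_mul_nonneg_right (by linarith : 0 ≤ l^2 * z 1) (by positivity)
      · rw [e2_F1 c] at C
        have : 0 ≤ l^2/2 * (2*h*z 0 - z 1) := by linarith
        linarith [nonneg_of_mul_nonneg_right this (by positivity)]
      · have e := gL_F1 c z
        have : 0 ≤ l * (2*h*(1-z 0) - z 1) := by linarith
        linarith [nonneg_of_mul_nonneg_right this hl]
    · right; left
      exact ⟨_, slantL h, k.joinXL hw hwK (by linarith) (by linarith)⟩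
  by_cases B' : h * (1 - l - w 0) - (1/2 - l) * w 1 ≤ 0
  · by_cases C : (1/2 - 3*l/2) * w 1 + h*(1 - l)*(w 0 - (1 - l)) ≤ 0
    · left
      obtain ⟨z, rfl⟩ := F_surj c 2 w
      refine ⟨2, z, ⟨?_, ?_, ?_⟩, rfl⟩
      · rw [r2_F2 c] at B'
        exact nonneg_of_mul_nonneg_right (by linarith : 0 ≤ l^2 * z 1) (by positivity)
      · have e := gR_F2 c z
        have : 0 ≤ l * (2*h*z 0 - z 1) := by linarith
        linarith [nonneg_of_mul_nonneg_right this hl]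
      · rw [e2'_F2 c] at C
        have : 0 ≤ l^2/2 * (2*h*(1-z 0) - z 1) := by linarith
        linarith [nonneg_of_mul_nonneg_right this (by positivity)]
    · right; left
      exact ⟨_, slantR h, k.joinXR hw hwK (by linarith) (by linarith)⟩
  · right; right
    exact ⟨pt (1/2) 0, pt_one _ _, k.joinT hw hwK (by linarith) (by linarith)⟩

theorem HT_bound {l h : ℝ} {K : Set Plane} (k : KC l h K) {z : Plane} (hz : z ∈ HT h) :
    infDist z K ≤ 2 := by
  refine (infDist_le_dist_of_mem k.v0).trans ?_
  rw [plane_dist]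
  have l2 := k.c.hl2
  have hpos := k.c.hpos
  have hh := k.c.hh
  obtain ⟨x0, x1⟩ := HT_x k.c hz
  obtain ⟨a, b, d⟩ := hz
  rw [Real.sqrt_le_left (by norm_num)]
  simp only [pt_zero, pt_one]
  have : h < 1 := by nlinarith
  have : z 1 ≤ 1 := by nlinarith
  nlinarith

theorem KC.EI_aux {l h : ℝ} {K : Set Plane} (k : KC l h K) (n : ℕ) : ∀ z ∈ HT h, z ∉ K →
    2 * l^n < infDist z K → EE h K z ∨ II h K z := by
  induction n with
  | zero =>
    intro z hz _ hd
    have := HT_bound k hz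
    simp at hd
    linarith
  | succ n ih =>
    intro w hw hwK hd
    rcases k.decomp hw hwK with ⟨i, z, hz, rfl⟩ | q
    · have hzK : z ∉ K := fun hh => hwK (k.fwd i z hh)
      have hl : 0 < l := by linarith [k.c.hl1]
      have e := infDist_F k.c i k.ne (k.fwd i) z
      have : 0 < l * (infDist z K - 2 * l^n) := by rw [pow_succ] at hd; linarith
      have := pos_of_mul_pos_right this hl.le
      rcases ih z hz hzK (by linarith) with r | r
      · exact Or.inl (k.EE_F i r)
      · exact Or.inr (k.II_F i r)
    · exact q

theorem KC.EI {l h : ℝ} {K : Set Plane} (k : KC l h K) {z : Plane} (hz : z ∈ HT h)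
    (hzK : z ∉ K) : EE h K z ∨ II h K z := by
  have hp : 0 < infDist z K := (k.cpt.isClosed.notMem_iff_infDist_pos k.ne).1 hzK
  obtain ⟨n, hn⟩ := exists_pow_lt_of_lt_one (half_pos hp) (by linarith [k.c.hl2] : l < 1)
  exact k.EI_aux n z hz hzK (by linarith)

def OO : Plane := pt (1/2) (-(Real.sqrt 3/6))

theorem G_OO (i : Fin 3) : kochG i OO = OO := by
  fin_cases i
  · exact G0 _
  · apply plane_ext
    · simp only [Fin.mk_one, Fin.isValue, G1_0, OO, pt_zero, pt_one]
      linear_combination (-1/12) * sq3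
    · simp only [Fin.mk_one, Fin.isValue, G1_1, OO, pt_zero, pt_one]
      ring
  · apply plane_ext
    · simp only [Fin.reduceFinMk, Fin.isValue, G2_0, OO, pt_zero, pt_one]
      linear_combination (1/12) * sq3
    · simp only [Fin.reduceFinMk, Fin.isValue, G2_1, OO, pt_zero, pt_one]
      ring

theorem mem_S {K : Set Plane} {p : Plane} :
    p ∈ snowflakeBoundary K ↔ ∃ i : Fin 3, ∃ z ∈ K, kochG i z = p := by
  simp only [snowflakeBoundary, Set.mem_union, Set.mem_image]
  constructor
  · rintro ((q | q) | q)
    · exact ⟨_, q⟩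
    · exact ⟨_, q⟩
    · exact ⟨_, q⟩
  · rintro ⟨i, q⟩
    fin_cases i
    · exact Or.inl (Or.inl q)
    · exact Or.inl (Or.inr q)
    · exact Or.inr q

theorem S_G1 {K : Set Plane} {p : Plane} (hp : p ∈ snowflakeBoundary K) :
    kochG 1 p ∈ snowflakeBoundary K := by
  obtain ⟨i, z, hz, rfl⟩ := mem_S.1 hp
  rw [mem_S]
  fin_cases i
  · exact ⟨1, z, hz, by simp [G0]⟩
  · exact ⟨2, z, hz, by simp [G11]⟩
  · exact ⟨0, z, hz, by simp [G0, G12]⟩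

theorem S_G {K : Set Plane} (i : Fin 3) {p : Plane} (hp : p ∈ snowflakeBoundary K) :
    kochG i p ∈ snowflakeBoundary K := by
  fin_cases i
  · simpa [G0] using hp
  · exact S_G1 hp
  · have := S_G1 (S_G1 hp)
    rwa [G11] at this

theorem S_G_not {K : Set Plane} (i : Fin 3) {p : Plane} (hp : p ∉ snowflakeBoundary K) :
    kochG i p ∉ snowflakeBoundary K := by
  intro hq
  fin_cases i
  · apply hp; simpa [G0] using hq
  · apply hp
    have := S_G 2 hq
    simpa [G21] using this
  · apply hp
    have := S_G 1 hq
    simpa [G12] using this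

theorem G1_y {l h : ℝ} (c : Ctx l h) {z : Plane} (hz : z ∈ HT h) :
    (kochG 1 z) 1 ≤ 0 ∧ (0 ≤ (kochG 1 z) 1 → z = pt 0 0) := by
  obtain ⟨x0, x1⟩ := HT_x c hz
  obtain ⟨a, b, d⟩ := hz
  have s := sq3p
  rw [G1_1]
  have : 0 ≤ Real.sqrt 3 * z 0 := by positivity
  refine ⟨by linarith, fun q => ?_⟩
  have e : Real.sqrt 3 * z 0 = 0 := by linarith
  have e0 : z 0 = 0 := (mul_eq_zero.1 e).resolve_left s.ne'
  exact plane_ext (by rw [pt_zero]; exact e0) (by rw [pt_one]; linarith)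

theorem G2_y {l h : ℝ} (c : Ctx l h) {z : Plane} (hz : z ∈ HT h) :
    (kochG 2 z) 1 ≤ 0 ∧ (0 ≤ (kochG 2 z) 1 → z = pt 1 0) := by
  obtain ⟨x0, x1⟩ := HT_x c hz
  obtain ⟨a, b, d⟩ := hz
  have s := sq3p
  rw [G2_1]
  have : 0 ≤ Real.sqrt 3 * (1 - z 0) := mul_nonneg s.le (by linarith)
  refine ⟨by linarith, fun q => ?_⟩
  have e : Real.sqrt 3 * (1 - z 0) = 0 := by linarith
  have e0 : 1 - z 0 = 0 := (mul_eq_zero.1 e).resolve_left s.ne'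
  exact plane_ext (by rw [pt_zero]; linarith) (by rw [pt_one]; linarith)

theorem KC.sub_S {l h : ℝ} {K : Set Plane} (_k : KC l h K) {z : Plane} (hz : z ∈ K) :
    z ∈ snowflakeBoundary K := mem_S.2 ⟨0, z, hz, G0 z⟩

theorem KC.not_S {l h : ℝ} {K : Set Plane} (k : KC l h K) {z : Plane} (hz : z ∈ HT h)
    (hzK : z ∉ K) : z ∉ snowflakeBoundary K := by
  intro hS
  obtain ⟨i, w, hw, e⟩ := mem_S.1 hS
  have hwH := k.sub_HT hw
  fin_cases i
  · simp [G0] at e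
    exact hzK (e ▸ hw)
  · simp only [Fin.mk_one, Fin.isValue] at e
    have q := (G1_y k.c hwH).2 (by rw [e]; exact hz.1)
    apply hzK
    rw [← e, q]
    convert k.v1 using 1
    apply plane_ext
    · simp [G1_0, pt_zero, pt_one]
    · simp [G1_1, pt_zero, pt_one]
  · simp only [Fin.reduceFinMk, Fin.isValue] at e
    have q := (G2_y k.c hwH).2 (by rw [e]; exact hz.1)
    apply hzK
    rw [← e, q]
    convert k.v0 using 1
    apply plane_ext
    · simp [G2_0, pt_zero, pt_one]; norm_num
    · simp [G2_1, pt_zero, pt_one]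

theorem Ctx.h_half {l h : ℝ} (c : Ctx l h) : h < 1/2 := by
  have := c.hh
  have := c.hl2
  have := c.hpos
  nlinarith

theorem aux_neg {h x y : ℝ} (hp : 0 < h) (hh : h < 1/2) (hy : 0 ≤ y) (hxy : y ≤ 2*h*x) :
    0 ≤ x*(h + Real.sqrt 3/2) + y*(1/2 - Real.sqrt 3*h) := by
  have s := sq3p
  have hx : 0 ≤ x := by
    by_contra q
    push Not at q
    nlinarith
  have a : Real.sqrt 3 * h * y ≤ Real.sqrt 3 * h * (2*h*x) :=
    mul_le_mul_of_nonneg_left hxy (by positivity)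
  have b : 0 ≤ Real.sqrt 3 * x * (1/2 - 2*h^2) := mul_nonneg (by positivity) (by nlinarith)
  have d : 0 ≤ x * h := by positivity
  linarith

theorem KC.S_gL {l h : ℝ} {K : Set Plane} (k : KC l h K) {z : Plane}
    (hz : z ∈ snowflakeBoundary K) : 0 ≤ 2*h*z 0 - z 1 := by
  obtain ⟨i, w, hw, rfl⟩ := mem_S.1 hz
  have hwH := k.sub_HT hw
  obtain ⟨x0, x1⟩ := HT_x k.c hwH
  obtain ⟨a, b, d⟩ := hwH
  have hp := k.c.hpos
  have s := sq3p
  fin_cases i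
  · simp [G0]; exact b
  · simp only [Fin.mk_one, Fin.isValue, G1_0, G1_1]
    have : 0 ≤ h * (2 - w 0) := mul_nonneg hp.le (by linarith)
    have : 0 ≤ h * Real.sqrt 3 * w 1 := by positivity
    have : 0 ≤ Real.sqrt 3 * w 0 := by positivity
    linarith
  · simp only [Fin.reduceFinMk, Fin.isValue, G2_0, G2_1]
    have := aux_neg hp k.c.h_half a d
    linarith

theorem KC.S_gR {l h : ℝ} {K : Set Plane} (k : KC l h K) {z : Plane}
    (hz : z ∈ snowflakeBoundary K) : 0 ≤ 2*h*(1 - z 0) - z 1 := by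
  obtain ⟨i, w, hw, rfl⟩ := mem_S.1 hz
  have hwH := k.sub_HT hw
  obtain ⟨x0, x1⟩ := HT_x k.c hwH
  obtain ⟨a, b, d⟩ := hwH
  have hp := k.c.hpos
  have s := sq3p
  fin_cases i
  · simp [G0]; exact d
  · simp only [Fin.mk_one, Fin.isValue, G1_0, G1_1]
    have := aux_neg hp k.c.h_half a b
    linarith
  · simp only [Fin.reduceFinMk, Fin.isValue, G2_0, G2_1]
    have : 0 ≤ h * (1 + w 0) := mul_nonneg hp.le (by linarith)
    have : 0 ≤ h * Real.sqrt 3 * w 1 := by positivity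
    have : 0 ≤ Real.sqrt 3 * (1 - w 0) := mul_nonneg s.le (by linarith)
    linarith

def Unb (K : Set Plane) (z : Plane) : Prop :=
  ∀ R : ℝ, ∃ w, JoinedIn (snowflakeBoundary K)ᶜ z w ∧ R < dist w OO

theorem ray {K : Set Plane} (a b d : ℝ)
    (hS : ∀ p ∈ snowflakeBoundary K, 0 ≤ a * p 0 + b * p 1 + d)
    (hO : 0 < a * OO 0 + b * OO 1 + d) {z : Plane} (hz : z ∉ snowflakeBoundary K)
    (hg : a * z 0 + b * z 1 + d ≤ 0) : Unb K z := by
  intro R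
  have hne : z ≠ OO := by rintro rfl; linarith
  have hd : 0 < dist z OO := dist_pos.2 hne
  obtain ⟨s, hs⟩ : ∃ s : ℝ, 0 < s ∧ R < (1 + s) * dist z OO := by
    refine ⟨|R| / dist z OO + 1, by positivity, ?_⟩
    have : (1 + (|R| / dist z OO + 1)) * dist z OO = |R| + 2 * dist z OO := by
      field_simp; ring
    rw [this]
    linarith [le_abs_self R]
  refine ⟨z + s • (z - OO), ?_, ?_⟩
  · refine seg_join hz ?_
    intro x t t0 t1 e0 e1 hx
    have := hS x hx
    rw [e0, e1] at this
    simp at this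
    have q : 0 < t * s * (a * OO 0 + b * OO 1 + d - (a * z 0 + b * z 1 + d)) :=
      mul_pos (mul_pos t0 hs.1) (by linarith)
    linarith
  · have : dist (z + s • (z - OO)) OO = (1 + s) * dist z OO := by
      rw [dist_eq_norm, dist_eq_norm, show z + s • (z - OO) - OO = (1 + s) • (z - OO) by
        rw [add_smul, one_smul]; abel, norm_smul, Real.norm_of_nonneg (by linarith [hs.1])]
    rw [this]; exact hs.2

theorem KC.unbL {l h : ℝ} {K : Set Plane} (k : KC l h K) {z : Plane}
    (hz : z ∉ snowflakeBoundary K) (hg : 2*h*z 0 - z 1 ≤ 0) : Unb K z := by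
  have hp := k.c.hpos
  have s := sq3p
  refine ray (2*h) (-1) 0 (fun p hp => ?_) ?_ hz (by linarith)
  · linarith [k.S_gL hp]
  · simp only [OO, pt_zero, pt_one]; linarith

theorem KC.unbR {l h : ℝ} {K : Set Plane} (k : KC l h K) {z : Plane}
    (hz : z ∉ snowflakeBoundary K) (hg : 2*h*(1 - z 0) - z 1 ≤ 0) : Unb K z := by
  have hp := k.c.hpos
  have s := sq3p
  refine ray (-2*h) (-1) (2*h) (fun p hp => ?_) ?_ hz (by linarith)
  · linarith [k.S_gR hp]
  · simp only [OO, pt_zero, pt_one]; linarith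

theorem KC.EE_unb {l h : ℝ} {K : Set Plane} (k : KC l h K) {z : Plane} (e : EE h K z) :
    Unb K z := by
  obtain ⟨w, hw, j⟩ := e
  have j' : JoinedIn (snowflakeBoundary K)ᶜ z w := j.mono (fun y hy => k.not_S hy.1 hy.2)
  have : Unb K w := by
    rcases hw with q | q
    · exact k.unbL j'.target_mem (by linarith)
    · exact k.unbR j'.target_mem (by linarith)
  intro R
  obtain ⟨v, hv, hR⟩ := this R
  exact ⟨v, j'.trans hv, hR⟩

theorem KC.join_O {l h : ℝ} {K : Set Plane} (k : KC l h K) {z : Plane}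
    (hz : z ∉ snowflakeBoundary K) (h0 : z 1 ≤ 0) (h1 : (kochG 1 z) 1 ≤ 0)
    (h2 : (kochG 2 z) 1 ≤ 0) : JoinedIn (snowflakeBoundary K)ᶜ z OO := by
  refine seg_join hz ?_
  intro x t t0 t1 e0 e1 hx
  have s := sq3p
  have key : ∀ i : Fin 3, (kochG i x) 1 < 0 := by
    intro i
    have ho : OO 1 < 0 := by rw [OO, pt_one]; linarith
    have ts : 0 < t * Real.sqrt 3 := by positivity
    fin_cases i
    · simp only [Fin.zero_eta, Fin.isValue, G0]
      have := lin_pos t0 t1 (neg_nonneg.2 h0) (neg_pos.2 ho)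
      rw [e1]; linarith
    · simp only [Fin.mk_one, Fin.isValue]
      have := lin_nn t0 t1 (neg_nonneg.2 h1) le_rfl
      rw [G1_1] at *
      rw [e0, e1]
      simp only [OO, pt_zero, pt_one]
      linarith
    · simp only [Fin.reduceFinMk, Fin.isValue]
      have := lin_nn t0 t1 (neg_nonneg.2 h2) le_rfl
      rw [G2_1] at *
      rw [e0, e1]
      simp only [OO, pt_zero, pt_one]
      linarith
  obtain ⟨i, w, hw, rfl⟩ := mem_S.1 hx
  have hw1 : 0 ≤ w 1 := (k.sub_HT hw).1
  fin_cases i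
  · have := key 0
    simp [G0] at this
    linarith
  · have := key 2
    simp [G21] at this
    linarith
  · have := key 1
    simp [G12] at this
    linarith

theorem KC.up {l h : ℝ} {K : Set Plane} (k : KC l h K) {z : Plane}
    (hz : z ∉ snowflakeBoundary K) (h0 : 0 ≤ z 1) :
    JoinedIn (snowflakeBoundary K)ᶜ z OO ∨ Unb K z := by
  by_cases hL : 2*h*z 0 - z 1 ≤ 0
  · exact Or.inr (k.unbL hz hL)
  by_cases hR : 2*h*(1 - z 0) - z 1 ≤ 0
  · exact Or.inr (k.unbR hz hR)
  have hH : z ∈ HT h := ⟨h0, by linarith, by linarith⟩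
  have hK : z ∉ K := fun q => hz (k.sub_S q)
  rcases k.EI hH hK with q | ⟨w, hw, j⟩
  · exact Or.inr (k.EE_unb q)
  · left
    have j' : JoinedIn (snowflakeBoundary K)ᶜ z w := j.mono (fun y hy => k.not_S hy.1 hy.2)
    have wH := j.target_mem.1
    exact j'.trans (k.join_O j'.target_mem hw.le (G1_y k.c wH).1 (G2_y k.c wH).1)

theorem join_G {K : Set Plane} (i : Fin 3) {z w : Plane}
    (j : JoinedIn (snowflakeBoundary K)ᶜ z w) :
    JoinedIn (snowflakeBoundary K)ᶜ (kochG i z) (kochG i w) := by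
  refine (j.map (G_cont i)).mono ?_
  rintro _ ⟨y, hy, rfl⟩
  exact S_G_not i hy

theorem good_G {K : Set Plane} (i : Fin 3) {z : Plane}
    (q : JoinedIn (snowflakeBoundary K)ᶜ z OO ∨ Unb K z) :
    JoinedIn (snowflakeBoundary K)ᶜ (kochG i z) OO ∨ Unb K (kochG i z) := by
  rcases q with q | q
  · left
    have := join_G i q
    rwa [G_OO] at this
  · right
    intro R
    obtain ⟨w, j, hR⟩ := q R
    refine ⟨kochG i w, join_G i j, ?_⟩
    have := G_dist i w OO
    rw [G_OO] at this
    rwa [this]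

theorem KC.classify {l h : ℝ} {K : Set Plane} (k : KC l h K) {z : Plane}
    (hz : z ∉ snowflakeBoundary K) : JoinedIn (snowflakeBoundary K)ᶜ z OO ∨ Unb K z := by
  by_cases h0 : 0 ≤ z 1
  · exact k.up hz h0
  by_cases h1 : 0 ≤ (kochG 1 z) 1
  · have := good_G 2 (k.up (S_G_not 1 hz) h1)
    rwa [G21] at this
  by_cases h2 : 0 ≤ (kochG 2 z) 1
  · have := good_G 1 (k.up (S_G_not 2 hz) h2)
    rwa [G12] at this
  exact Or.inl (k.join_O hz (by linarith) (by linarith) (by linarith))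

theorem comp_join {F : Set Plane} {x y w : Plane} (hy : y ∈ connectedComponentIn F x)
    (j : JoinedIn F y w) : w ∈ connectedComponentIn F x := by
  rw [connectedComponentIn_eq hy]
  have : IsPreconnected (pathComponentIn F y) :=
    (isPathConnected_pathComponentIn j.source_mem).isConnected.isPreconnected
  exact this.subset_connectedComponentIn (mem_pathComponentIn_self j.source_mem)
    pathComponentIn_subset j

theorem comp_not_unb {K : Set Plane} {x y : Plane}
    (hb : Bornology.IsBounded (connectedComponentIn (snowflakeBoundary K)ᶜ x))
    (hy : y ∈ connectedComponentIn (snowflakeBoundary K)ᶜ x) : ¬ Unb K y := by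
  intro hu
  obtain ⟨R, hR⟩ := hb.subset_closedBall OO
  obtain ⟨w, j, hw⟩ := hu R
  have := hR (comp_join hy j)
  rw [mem_closedBall] at this
  linarith

theorem KC.tip_in {l h : ℝ} {K : Set Plane} (k : KC l h K) {x : Plane}
    (hx : x ∈ (snowflakeBoundary K)ᶜ)
    (hb : Bornology.IsBounded (connectedComponentIn (snowflakeBoundary K)ᶜ x))
    {e : ℝ} (he : 0 < e) (heh : e < h) :
    pt (1/2) (h - e) ∈ connectedComponentIn (snowflakeBoundary K)ᶜ x := by
  have hx' := mem_connectedComponentIn hx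
  have l2 := k.c.hl2
  have jx := (k.classify hx).resolve_right (comp_not_unb hb hx')
  have hO := comp_join hx' jx
  have hH : pt (1/2) (h - e) ∈ HT h := by
    refine ⟨?_, ?_, ?_⟩ <;> simp only [pt_zero, pt_one] <;> linarith
  have le : 0 < (1/2 - l) * e := mul_pos (by linarith) he
  have hK : pt (1/2) (h - e) ∉ K := by
    apply k.notT hH.1 <;> simp only [pt_zero, pt_one] <;> linarith
  have j1 : JoinedIn (HT h \ K) (pt (1/2) (h-e)) (pt (1/2) 0) := by
    apply k.joinT hH hK <;> simp only [pt_zero, pt_one] <;> linarith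
  have wH := j1.target_mem.1
  have j2 := j1.mono (fun y hy => k.not_S hy.1 hy.2 : HT h \ K ⊆ (snowflakeBoundary K)ᶜ)
  have j3 := k.join_O j2.target_mem (pt_one _ _).le (G1_y k.c wH).1 (G2_y k.c wH).1
  exact comp_join hO (j2.trans j3).symm

theorem infDist_frontier_le {Ω : Set Plane} {p V : Plane} (hp : p ∈ Ω) (hV : V ∉ Ω) :
    Metric.infDist p (frontier Ω) ≤ dist p V := by
  have hs : IsPreconnected (segment ℝ p V) := (convex_segment p V).isPreconnected
  obtain ⟨w, hw, hwf⟩ : ∃ w ∈ segment ℝ p V, w ∈ frontier Ω := by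
    by_contra! hno
    have key : ∀ w ∈ segment ℝ p V, w ∈ interior Ω ∨ w ∈ (closure Ω)ᶜ := by
      intro w hw
      by_contra! hc
      exact hno w hw ⟨not_not.1 hc.2, hc.1⟩
    have hpi : p ∈ interior Ω := (key p (left_mem_segment ℝ p V)).resolve_right
      (fun q => q (subset_closure hp))
    have hVc : V ∈ (closure Ω)ᶜ := (key V (right_mem_segment ℝ p V)).resolve_left
      (fun q => hV (interior_subset q))
    obtain ⟨w, _, hw1, hw2⟩ := hs _ _ isOpen_interior isClosed_closure.isOpen_compl key
      ⟨p, left_mem_segment ℝ p V, hpi⟩ ⟨V, right_mem_segment ℝ p V, hVc⟩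
    exact hw2 (subset_closure (interior_subset hw1))
  have h1 := Metric.infDist_le_dist_of_mem (x := p) hwf
  have h2 := dist_add_dist_of_mem_segment hw
  have h3 : 0 ≤ dist w V := dist_nonneg
  linarith

theorem iter3 {l : ℝ} (n : ℕ) (z : Plane) :
    ((kochF l 3)^[n] z) 0 = 1 + l^n * (z 0 - 1) ∧ ((kochF l 3)^[n] z) 1 = l^n * z 1 := by
  induction n with
  | zero => simp
  | succ n ih =>
    rw [Function.iterate_succ_apply', F3_0, F3_1, ih.1, ih.2]
    constructor <;> ring

theorem iter0 {l : ℝ} (n : ℕ) (z : Plane) :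
    ((kochF l 0)^[n] z) 0 = l^n * z 0 ∧ ((kochF l 0)^[n] z) 1 = l^n * z 1 := by
  induction n with
  | zero => simp
  | succ n ih =>
    rw [Function.iterate_succ_apply', F0_0, F0_1, ih.1, ih.2]
    constructor <;> ring

theorem KC.iter_mem {l h : ℝ} {K : Set Plane} (k : KC l h K) (j : Fin 4) (n : ℕ) {z : Plane}
    (hz : z ∈ K) : (kochF l j)^[n] z ∈ K := by
  induction n with
  | zero => exact hz
  | succ n ih => rw [Function.iterate_succ_apply']; exact k.fwd j _ ih

theorem KC.EE_iter {l h : ℝ} {K : Set Plane} (k : KC l h K) (i j : Fin 4) (n : ℕ) {z : Plane}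
    (hz : z ∈ HT h) (hzK : z ∉ K) (hs : Slant h z) :
    EE h K (kochF l i ((kochF l j)^[n] z)) := by
  cases n with
  | zero => exact k.EE_slant i hz hzK hs
  | succ n =>
    apply k.EE_F
    induction n with
    | zero => exact k.EE_slant j hz hzK hs
    | succ n ih => rw [Function.iterate_succ_apply']; exact k.EE_F j ih

theorem KC.unb_iter {l h : ℝ} {K : Set Plane} (k : KC l h K) (i j : Fin 4) (n : ℕ) {z p : Plane}
    (hz : z ∈ HT h) (hs : Slant h z) (hp : kochF l i ((kochF l j)^[n] z) = p)
    (hpS : p ∉ snowflakeBoundary K) : Unb K p := by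
  have hzK : z ∉ K := fun hzK => hpS (by
    rw [← hp]; exact k.sub_S (k.fwd i _ (k.iter_mem j n hzK)))
  rw [← hp]
  exact k.EE_unb (k.EE_iter i j n hz hzK hs)

/-- the six functionals cutting out the hexagon at scale `M = l^(n+2)` -/
def mm (l h M : ℝ) (p : Plane) : ℝ :=
  min (min (min (M + (1/2-l)*(p 0 - 1/2) + h*(p 1 - h))
    (2*h*(M + (1/2-l)*(p 0 - 1/2) + h*(p 1 - h)) - ((1/2-l)*(p 1 - h) - h*(p 0 - 1/2))))
    (2*h*(p 0 - 1/2) - (p 1 - h)))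
  (min (min (M - (1/2-l)*(p 0 - 1/2) + h*(p 1 - h))
    (2*h*(M - (1/2-l)*(p 0 - 1/2) + h*(p 1 - h)) - ((1/2-l)*(p 1 - h) + h*(p 0 - 1/2))))
    (-2*h*(p 0 - 1/2) - (p 1 - h)))

theorem mm_cont (l h M : ℝ) : Continuous (mm l h M) := by
  unfold mm; fun_prop

/-- slanted side of the left triangle -/
theorem KC.caseL {l h : ℝ} {K : Set Plane} (k : KC l h K) (n : ℕ) {p : Plane}
    (hpS : p ∉ snowflakeBoundary K)
    (hA : 0 ≤ l^n*l^2 + (1/2-l)*(p 0 - 1/2) + h*(p 1 - h))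
    (hB : 0 ≤ 2*h*(l^n*l^2 + (1/2-l)*(p 0 - 1/2) + h*(p 1 - h))
      - ((1/2-l)*(p 1 - h) - h*(p 0 - 1/2)))
    (hC : 0 ≤ 2*h*(p 0 - 1/2) - (p 1 - h))
    (hC' : 0 ≤ -2*h*(p 0 - 1/2) - (p 1 - h))
    (hor : 2*h*(l^n*l^2 + (1/2-l)*(p 0 - 1/2) + h*(p 1 - h))
      - ((1/2-l)*(p 1 - h) - h*(p 0 - 1/2)) = 0 ∨ 2*h*(p 0 - 1/2) - (p 1 - h) = 0) :
    Unb K p := by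
  have c := k.c
  have hl0 : 0 < l := by linarith [c.hl1]
  have hh := c.hh
  have hp := c.hpos
  have hs : 0 < l^n := by positivity
  obtain ⟨z, hz⟩ : ∃ z : Plane, kochF l 1 ((kochF l 3)^[n] z) = p := by
    obtain ⟨y, hy⟩ := F_surj c 1 p
    refine ⟨pt (1 + (y 0 - 1)/l^n) (y 1/l^n), ?_⟩
    rw [← hy]; congr 1
    apply plane_ext
    · rw [(iter3 _ _).1, pt_zero]; field_simp; ring
    · rw [(iter3 _ _).2, pt_one]; field_simp
  have e0 : p 0 = (1/2-l)*(1 + l^n*(z 0 - 1)) - h*(l^n*z 1) + l := by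
    rw [← hz, F1_0 c, (iter3 _ _).1, (iter3 _ _).2]
  have e1 : p 1 = h*(1 + l^n*(z 0 - 1)) + (1/2-l)*(l^n*z 1) := by
    rw [← hz, F1_1 c, (iter3 _ _).1, (iter3 _ _).2]
  set s := l^n
  have i1 : s*l^2 + (1/2-l)*(p 0 - 1/2) + h*(p 1 - h) = s*l^2*z 0 := by
    rw [e0, e1]; linear_combination (s*(z 0 - 1))*hh
  have i2 : (1/2-l)*(p 1 - h) - h*(p 0 - 1/2) = s*l^2*z 1 := by
    rw [e0, e1]; linear_combination (s*z 1)*hh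
  have i3 : l*(2*h*(p 0 - 1/2) - (p 1 - h)) = s*l^2*(2*h*(1 - z 0) - z 1) := by
    rw [e0, e1]; linear_combination (-2*l*s*z 1)*hh
  have i4 : l*(p 0 - 1/2) = l*s*((1/2-l)*(z 0 - 1) - h*z 1) := by
    rw [e0]; ring
  rw [i1, i2] at hB hor
  rw [i1] at hA
  have hM : 0 < s*l^2 := by positivity
  have z0 : 0 ≤ z 0 := nonneg_of_mul_nonneg_right hA hM
  have zB : 0 ≤ 2*h*z 0 - z 1 := by
    apply nonneg_of_mul_nonneg_right _ hM; linarith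
  have zC : 0 ≤ 2*h*(1 - z 0) - z 1 := by
    apply nonneg_of_mul_nonneg_right _ hM; rw [← i3]; positivity
  rcases hor with h1 | h1
  · have hz1 : z 1 = 2*h*z 0 := by
      have : s*l^2*(2*h*z 0 - z 1) = 0 := by linarith
      rcases mul_eq_zero.1 this with q | q
      · linarith
      · linarith
    refine k.unb_iter 1 3 n (z := z) ⟨?_, by linarith, by linarith⟩ (Or.inl hz1) hz hpS
    rw [hz1]; positivity
  · have hz1 : z 1 = 2*h*(1 - z 0) := by
      rw [h1, mul_zero] at i3
      rcases mul_eq_zero.1 i3.symm with q | q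
      · linarith
      · linarith
    refine k.unb_iter 1 3 n (z := z) ⟨?_, by linarith, by linarith⟩ (Or.inr hz1) hz hpS
    have hdx : p 0 - 1/2 ≤ 0 := by
      have : 0 ≤ 4*h*(-(p 0 - 1/2)) := by linarith
      have := nonneg_of_mul_nonneg_right this (by positivity)
      linarith
    have : p 0 - 1/2 = s*l*(z 0 - 1) := by
      rw [e0, hz1]; linear_combination (2*s*(z 0 - 1))*hh
    have h5 : 0 ≤ s*l*(1 - z 0) := by linarith
    have := nonneg_of_mul_nonneg_right h5 (by positivity)
    rw [hz1]; positivity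

/-- slanted side of the right triangle -/
theorem KC.caseR {l h : ℝ} {K : Set Plane} (k : KC l h K) (n : ℕ) {p : Plane}
    (hpS : p ∉ snowflakeBoundary K)
    (hA : 0 ≤ l^n*l^2 - (1/2-l)*(p 0 - 1/2) + h*(p 1 - h))
    (hB : 0 ≤ 2*h*(l^n*l^2 - (1/2-l)*(p 0 - 1/2) + h*(p 1 - h))
      - ((1/2-l)*(p 1 - h) + h*(p 0 - 1/2)))
    (hC : 0 ≤ -2*h*(p 0 - 1/2) - (p 1 - h))
    (hC' : 0 ≤ 2*h*(p 0 - 1/2) - (p 1 - h))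
    (hor : 2*h*(l^n*l^2 - (1/2-l)*(p 0 - 1/2) + h*(p 1 - h))
      - ((1/2-l)*(p 1 - h) + h*(p 0 - 1/2)) = 0 ∨ -2*h*(p 0 - 1/2) - (p 1 - h) = 0) :
    Unb K p := by
  have c := k.c
  have hl0 : 0 < l := by linarith [c.hl1]
  have hh := c.hh
  have hp := c.hpos
  have hs : 0 < l^n := by positivity
  obtain ⟨z, hz⟩ : ∃ z : Plane, kochF l 2 ((kochF l 0)^[n] z) = p := by
    obtain ⟨y, hy⟩ := F_surj c 2 p
    refine ⟨pt (y 0/l^n) (y 1/l^n), ?_⟩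
    rw [← hy]; congr 1
    apply plane_ext
    · rw [(iter0 _ _).1, pt_zero]; field_simp
    · rw [(iter0 _ _).2, pt_one]; field_simp
  have e0 : p 0 = (1/2-l)*(l^n*z 0) + h*(l^n*z 1) + 1/2 := by
    rw [← hz, F2_0 c, (iter0 _ _).1, (iter0 _ _).2]
  have e1 : p 1 = -h*(l^n*z 0) + (1/2-l)*(l^n*z 1) + h := by
    rw [← hz, F2_1 c, (iter0 _ _).1, (iter0 _ _).2]
  set s := l^n
  have i1 : s*l^2 - (1/2-l)*(p 0 - 1/2) + h*(p 1 - h) = s*l^2*(1 - z 0) := by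
    rw [e0, e1]; linear_combination (-s*z 0)*hh
  have i2 : (1/2-l)*(p 1 - h) + h*(p 0 - 1/2) = s*l^2*z 1 := by
    rw [e0, e1]; linear_combination (s*z 1)*hh
  have i3 : l*(-2*h*(p 0 - 1/2) - (p 1 - h)) = s*l^2*(2*h*z 0 - z 1) := by
    rw [e0, e1]; linear_combination (-2*l*s*z 1)*hh
  rw [i1, i2] at hB hor
  rw [i1] at hA
  have hM : 0 < s*l^2 := by positivity
  have z0 : 0 ≤ 1 - z 0 := nonneg_of_mul_nonneg_right hA hM
  have zB : 0 ≤ 2*h*(1 - z 0) - z 1 := by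
    apply nonneg_of_mul_nonneg_right _ hM; linarith
  have zC : 0 ≤ 2*h*z 0 - z 1 := by
    apply nonneg_of_mul_nonneg_right _ hM; rw [← i3]; positivity
  rcases hor with h1 | h1
  · have hz1 : z 1 = 2*h*(1 - z 0) := by
      have : s*l^2*(2*h*(1 - z 0) - z 1) = 0 := by linarith
      rcases mul_eq_zero.1 this with q | q
      · linarith
      · linarith
    refine k.unb_iter 2 0 n (z := z) ⟨?_, by linarith, by linarith⟩ (Or.inr hz1) hz hpS
    rw [hz1]; positivity
  · have hz1 : z 1 = 2*h*z 0 := by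
      rw [h1, mul_zero] at i3
      rcases mul_eq_zero.1 i3.symm with q | q
      · linarith
      · linarith
    refine k.unb_iter 2 0 n (z := z) ⟨?_, by linarith, by linarith⟩ (Or.inl hz1) hz hpS
    have hdx : 0 ≤ p 0 - 1/2 := by
      have : 0 ≤ 4*h*(p 0 - 1/2) := by linarith
      exact nonneg_of_mul_nonneg_right this (by positivity)
    have : p 0 - 1/2 = s*l*z 0 := by
      rw [e0, hz1]; linear_combination (2*s*z 0)*hh
    have h5 : 0 ≤ s*l*z 0 := by linarith
    have := nonneg_of_mul_nonneg_right h5 (by positivity)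
    rw [hz1]; positivity

/-- elementary estimate on the crosscut -/
theorem cut_est {l h s x y : ℝ} (c : Ctx l h) (hs : 0 < s)
    (hA : s*l^2 + (1/2-l)*x + h*y = 0) (hA' : 0 ≤ s*l^2 - (1/2-l)*x + h*y)
    (hB : 0 ≤ h*x - (1/2-l)*y) :
    √((x + s*(1/2-l))^2 + (y + s*h)^2) ≤ (1/2-l)/l * √(x^2+y^2) ∧ s*l ≤ √(x^2+y^2) := by
  have hl0 : 0 < l := by linarith [c.hl1]
  have hl2 : 0 < 1/2 - l := by linarith [c.hl2]
  have hh := c.hh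
  have hp := c.hpos
  have hx : x ≤ 0 := by
    have : 0 ≤ (2*(1/2-l))*(-x) := by linarith
    have := nonneg_of_mul_nonneg_right this (by positivity)
    linarith
  have e1 : l^2*(x^2+y^2) = (h*x-(1/2-l)*y)^2 + (s*l^2)^2 := by
    have : (s*l^2)^2 = ((1/2-l)*x+h*y)^2 := by
      rw [show (1/2-l)*x+h*y = -(s*l^2) by linarith]; ring
    rw [this]; linear_combination (-(x^2+y^2))*hh
  have e2 : l^2*((x + s*(1/2-l))^2 + (y + s*h)^2) = (h*x-(1/2-l)*y)^2 := by
    linear_combination e1 + (2*s*l^2)*hA + (l^2*s^2)*hh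
  have hu : h*(h*x-(1/2-l)*y) ≤ (1/2-l)*(s*l^2) := by
    have : h*(h*x-(1/2-l)*y) = (1/2-l)*(s*l^2) + l^2*x := by
      linear_combination (-(1/2-l))*hA + x*hh
    have : l^2*x ≤ 0 := mul_nonpos_of_nonneg_of_nonpos (by positivity) hx
    linarith
  have hu2 : (h*(h*x-(1/2-l)*y))^2 ≤ ((1/2-l)*(s*l^2))^2 :=
    pow_le_pow_left₀ (by positivity) hu 2
  constructor
  · apply Real.sqrt_le_iff.2
    refine ⟨by positivity, ?_⟩
    rw [mul_pow, Real.sq_sqrt (by positivity), div_pow, div_mul_eq_mul_div, le_div_iff₀ (by positivity)]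
    have key : l^2*(h*x-(1/2-l)*y)^2 ≤ (1/2-l)^2*(l^2*(x^2+y^2)) := by
      rw [e1]
      have : l^2*(h*x-(1/2-l)*y)^2 = (1/2-l)^2*(h*x-(1/2-l)*y)^2 + (h*(h*x-(1/2-l)*y))^2 := by
        linear_combination (-(h*x-(1/2-l)*y)^2)*hh
      rw [this]; linarith
    have : l^2*(((x + s*(1/2-l))^2 + (y + s*h)^2)*l^2) ≤ l^2*((1/2-l)^2*(x^2+y^2)) := by
      calc _ = l^2*(l^2*((x + s*(1/2-l))^2 + (y + s*h)^2)) := by ring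
        _ = l^2*(h*x-(1/2-l)*y)^2 := by rw [e2]
        _ ≤ _ := key
        _ = _ := by ring
    exact le_of_mul_le_mul_left this (by positivity)
  · apply Real.le_sqrt_of_sq_le
    have : l^2*(s*l)^2 ≤ l^2*(x^2+y^2) := by
      rw [e1]
      have := sq_nonneg (h*x-(1/2-l)*y)
      linarith [show l^2*(s*l)^2 = (s*l^2)^2 by ring]
    exact le_of_mul_le_mul_left this (by positivity)

theorem mm_nonneg {l h M : ℝ} {p : Plane} (hm : 0 ≤ mm l h M p) :
    0 ≤ M + (1/2-l)*(p 0 - 1/2) + h*(p 1 - h) ∧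
    0 ≤ 2*h*(M + (1/2-l)*(p 0 - 1/2) + h*(p 1 - h)) - ((1/2-l)*(p 1 - h) - h*(p 0 - 1/2)) ∧
    0 ≤ 2*h*(p 0 - 1/2) - (p 1 - h) ∧
    0 ≤ M - (1/2-l)*(p 0 - 1/2) + h*(p 1 - h) ∧
    0 ≤ 2*h*(M - (1/2-l)*(p 0 - 1/2) + h*(p 1 - h)) - ((1/2-l)*(p 1 - h) + h*(p 0 - 1/2)) ∧
    0 ≤ -2*h*(p 0 - 1/2) - (p 1 - h) := by
  unfold mm at hm
  simp only [le_min_iff] at hm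
  obtain ⟨⟨⟨a, b⟩, d⟩, ⟨⟨a', b'⟩, d'⟩⟩ := hm
  exact ⟨a, b, d, a', b', d'⟩

theorem KC.cross {l h : ℝ} {K : Set Plane} (k : KC l h K) (n : ℕ) {x p : Plane}
    (hb : Bornology.IsBounded (connectedComponentIn (snowflakeBoundary K)ᶜ x))
    (hp : p ∈ connectedComponentIn (snowflakeBoundary K)ᶜ x)
    (hm : mm l h (l^n*l^2) p = 0) :
    Metric.infDist p (frontier (connectedComponentIn (snowflakeBoundary K)ᶜ x))
      ≤ (1/2-l)/l * dist p (pt (1/2) h) ∧ l^n*l ≤ dist p (pt (1/2) h) := by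
  have c := k.c
  have hl0 : 0 < l := by linarith [c.hl1]
  have hs : 0 < l^n := by positivity
  have hpS : p ∉ snowflakeBoundary K := connectedComponentIn_subset _ _ hp
  have hnu := comp_not_unb hb hp
  obtain ⟨a, b, d, a', b', d'⟩ := mm_nonneg hm.ge
  have hb0 : 2*h*(l^n*l^2 + (1/2-l)*(p 0 - 1/2) + h*(p 1 - h))
      - ((1/2-l)*(p 1 - h) - h*(p 0 - 1/2)) ≠ 0 :=
    fun e => hnu (k.caseL n hpS a b d d' (Or.inl e))
  have hd0 : 2*h*(p 0 - 1/2) - (p 1 - h) ≠ 0 :=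
    fun e => hnu (k.caseL n hpS a b d d' (Or.inr e))
  have hb0' : 2*h*(l^n*l^2 - (1/2-l)*(p 0 - 1/2) + h*(p 1 - h))
      - ((1/2-l)*(p 1 - h) + h*(p 0 - 1/2)) ≠ 0 :=
    fun e => hnu (k.caseR n hpS a' b' d' d (Or.inl e))
  have hd0' : -2*h*(p 0 - 1/2) - (p 1 - h) ≠ 0 :=
    fun e => hnu (k.caseR n hpS a' b' d' d (Or.inr e))
  have hor : l^n*l^2 + (1/2-l)*(p 0 - 1/2) + h*(p 1 - h) = 0 ∨
      l^n*l^2 - (1/2-l)*(p 0 - 1/2) + h*(p 1 - h) = 0 := by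
    by_contra! hne
    have : 0 < mm l h (l^n*l^2) p := by
      unfold mm
      simp only [lt_min_iff]
      exact ⟨⟨⟨lt_of_le_of_ne a hne.1.symm, lt_of_le_of_ne b hb0.symm⟩,
        lt_of_le_of_ne d hd0.symm⟩, ⟨⟨lt_of_le_of_ne a' hne.2.symm,
        lt_of_le_of_ne b' hb0'.symm⟩, lt_of_le_of_ne d' hd0'.symm⟩⟩
    linarith
  have nomem : ∀ V ∈ K, V ∉ connectedComponentIn (snowflakeBoundary K)ᶜ x :=
    fun V hV hq => connectedComponentIn_subset _ _ hq (k.sub_S hV)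
  rcases hor with e | e
  · obtain ⟨q1, q2⟩ := cut_est c hs e a' (by rw [e] at b; linarith)
    have hV := nomem _ (k.fwd 1 _ (k.iter_mem 3 n k.v0))
    have hd := infDist_frontier_le hp hV
    have e1 : dist p (kochF l 1 ((kochF l 3)^[n] (pt 0 0))) =
        √((p 0 - 1/2 + l^n*(1/2-l))^2 + (p 1 - h + l^n*h)^2) := by
      rw [plane_dist, F1_0 c, F1_1 c, (iter3 _ _).1, (iter3 _ _).2, pt_zero, pt_one]
      congr 1; ring
    have e2 : dist p (pt (1/2) h) = √((p 0 - 1/2)^2 + (p 1 - h)^2) := by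
      rw [plane_dist, pt_zero, pt_one]
    rw [e1] at hd
    rw [e2]
    exact ⟨hd.trans q1, q2⟩
  · obtain ⟨q1, q2⟩ := cut_est (x := -(p 0 - 1/2)) (y := p 1 - h) c hs (by linarith) (by linarith)
      (by rw [e] at b'; linarith)
    have hV := nomem _ (k.fwd 2 _ (k.iter_mem 0 n k.v1))
    have hd := infDist_frontier_le hp hV
    have e1 : dist p (kochF l 2 ((kochF l 0)^[n] (pt 1 0))) =
        √((-(p 0 - 1/2) + l^n*(1/2-l))^2 + (p 1 - h + l^n*h)^2) := by
      rw [plane_dist, F2_0 c, F2_1 c, (iter0 _ _).1, (iter0 _ _).2, pt_zero, pt_one]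
      congr 1; ring
    have e2 : dist p (pt (1/2) h) = √((-(p 0 - 1/2))^2 + (p 1 - h)^2) := by
      rw [plane_dist, pt_zero, pt_one]; congr 1; ring
    rw [e1] at hd
    rw [e2]
    exact ⟨hd.trans q1, q2⟩

theorem KC.final {l h : ℝ} {K : Set Plane} (k : KC l h K) {x : Plane}
    (hx : x ∈ (snowflakeBoundary K)ᶜ)
    (hb : Bornology.IsBounded (connectedComponentIn (snowflakeBoundary K)ᶜ x)) {J : ℝ}
    (hJ : (1/2 - l)/l < J) :
    ¬ IsJohnDomain (connectedComponentIn (snowflakeBoundary K)ᶜ x) J := by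
  rintro ⟨x₀, hx₀, hjohn⟩
  have c := k.c
  have hl0 : 0 < l := by linarith [c.hl1]
  have hl1 : l < 1 := by linarith [c.hl2]
  have hl2 : 0 < 1/2 - l := by linarith [c.hl2]
  have hp := c.hpos
  have hJ0 : 0 < J := lt_trans (by positivity) hJ
  have hne : x₀ ≠ pt (1/2) h := by
    rintro rfl
    have hP : pt (1/2) h ∈ K := by
      have := k.fwd 2 _ k.v0
      rwa [show kochF l 2 (pt 0 0) = pt (1/2) h from
        plane_ext (by simp [F2_0 c, pt_zero, pt_one]) (by simp [F2_1 c, pt_zero, pt_one])] at this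
    exact connectedComponentIn_subset _ _ hx₀ (k.sub_S hP)
  obtain ⟨n, hn⟩ : ∃ n : ℕ, mm l h (l^n*l^2) x₀ < 0 := by
    by_contra! hall
    have hy : x₀ 1 - h ≤ 0 := by
      obtain ⟨a, b, d, a', b', d'⟩ := mm_nonneg (hall 0)
      linarith
    have hy' : 0 ≤ x₀ 1 - h := by
      by_contra! hlt
      obtain ⟨n, hn⟩ := exists_pow_lt_of_lt_one (show 0 < -(h*(x₀ 1 - h)) by nlinarith) hl1
      obtain ⟨a, b, d, a', b', d'⟩ := mm_nonneg (hall n)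
      have : l^n*l^2 ≤ l^n := mul_le_of_le_one_right (by positivity) (by nlinarith)
      linarith
    obtain ⟨a, b, d, a', b', d'⟩ := mm_nonneg (hall 0)
    apply hne
    apply plane_ext
    · rw [pt_zero]
      have h1 : 0 ≤ h*(x₀ 0 - 1/2) := by linarith
      have h2 : 0 ≤ h*(-(x₀ 0 - 1/2)) := by linarith
      have := nonneg_of_mul_nonneg_right h1 hp
      have := nonneg_of_mul_nonneg_right h2 hp
      linarith
    · rw [pt_one]; linarith
  have hs : 0 < l^n := by positivity
  obtain ⟨e, he, he1, he2, he3⟩ : ∃ e : ℝ, 0 < e ∧ e < h ∧ h*e < l^n*l^2 ∧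
      J*e < (J - (1/2-l)/l)*(l^n*l) := by
    have hd : 0 < J - (1/2-l)/l := by linarith
    have q1 : 0 < l^n*l^2/h := by positivity
    have q2 : 0 < (J - (1/2-l)/l)*(l^n*l)/J := by positivity
    obtain ⟨e, he, hlt⟩ := exists_between (lt_min hp (lt_min q1 q2))
    simp only [lt_min_iff] at hlt
    refine ⟨e, he, hlt.1, ?_, ?_⟩
    · have := (lt_div_iff₀ hp).1 hlt.2.1; linarith
    · have := (lt_div_iff₀ hJ0).1 hlt.2.2; linarith
  obtain ⟨L, γ, hL, hlip, h0, h1, hg⟩ := hjohn _ (k.tip_in hx hb he he1)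
  have hm0 : 0 < mm l h (l^n*l^2) (γ 0) := by
    rw [h0]
    unfold mm
    simp only [lt_min_iff, pt_zero, pt_one]
    have t1 : 0 < (1/2-l)*e := by positivity
    have t2 : 0 < h*(l^n*l^2 - h*e) := mul_pos hp (by linarith)
    refine ⟨⟨⟨?_, ?_⟩, ?_⟩, ⟨⟨?_, ?_⟩, ?_⟩⟩ <;> linarith
  have hcont : ContinuousOn (fun t => mm l h (l^n*l^2) (γ t)) (Icc 0 L) :=
    (mm_cont _ _ _).comp_continuousOn hlip.continuousOn
  obtain ⟨t, ht, hmt⟩ := intermediate_value_Icc' hL hcont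
    (show (0:ℝ) ∈ Icc _ _ from ⟨by rw [h1]; exact hn.le, hm0.le⟩)
  obtain ⟨hin, hJt⟩ := hg t ht
  obtain ⟨r1, r2⟩ := k.cross n hb hin hmt
  have hdt : dist (γ t) (γ 0) ≤ t := by
    have := hlip.dist_le_mul t ht 0 ⟨le_rfl, hL⟩
    simpa [abs_of_nonneg ht.1] using this
  have hde : dist (γ 0) (pt (1/2) h) = e := by
    rw [h0, plane_dist, pt_zero, pt_one, pt_zero, pt_one]
    rw [show ((1:ℝ)/2 - 1/2)^2 + (h - e - h)^2 = e^2 by ring, Real.sqrt_sq he.le]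
  have htri := dist_triangle (γ t) (γ 0) (pt (1/2) h)
  have hD : dist (γ t) (pt (1/2) h) - e ≤ t := by linarith
  have u1 := mul_le_mul_of_nonneg_left hD hJ0.le
  have u2 := mul_le_mul_of_nonneg_left r2 (show 0 ≤ J - (1/2-l)/l by linarith)
  linarith

/-- **Optimality of the John constant for the snowflake domain.** The bounded connected
component `Ω` of the complement of the snowflake boundary built from the von Koch curve
with parameter `l ∈ [1/3,1/2)` is not a `J`-John domain for any `J > (1/2-l)/l`. -/
theorem snowflake_not_johnDomain (l : ℝ) (hl1 : 1/3 ≤ l) (hl2 : l < 1/2)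
    (K : Set Plane) (hne : K.Nonempty) (hcomp : IsCompact K)
    (hK : K = kochF l 0 '' K ∪ kochF l 1 '' K ∪ kochF l 2 '' K ∪ kochF l 3 '' K)
    (Ω : Set Plane) (hbdd : Bornology.IsBounded Ω)
    (hΩ : ∃ x ∈ (snowflakeBoundary K)ᶜ, Ω = connectedComponentIn (snowflakeBoundary K)ᶜ x)
    (J : ℝ) (hJ : (1/2 - l) / l < J) :
    ¬ IsJohnDomain Ω J := by
  obtain ⟨x, hx, rfl⟩ := hΩ
  have c : Ctx l (Real.sqrt (l - 1/4)) :=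
    ⟨hl1, hl2, Real.sqrt_pos.2 (by linarith), Real.sq_sqrt (by linarith), rfl⟩
  have k : KC l (Real.sqrt (l - 1/4)) K := by
    refine ⟨c, hne, hcomp, ?_, ?_⟩
    · intro i z hz
      rw [hK]
      fin_cases i
      · exact Or.inl (Or.inl (Or.inl ⟨z, hz, rfl⟩))
      · exact Or.inl (Or.inl (Or.inr ⟨z, hz, rfl⟩))
      · exact Or.inl (Or.inr ⟨z, hz, rfl⟩)
      · exact Or.inr ⟨z, hz, rfl⟩
    · intro z hz
      rw [hK] at hz
      rcases hz with ((⟨w, hw, e⟩ | ⟨w, hw, e⟩) | ⟨w, hw, e⟩) | ⟨w, hw, e⟩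
      · exact ⟨0, w, hw, e⟩
      · exact ⟨1, w, hw, e⟩
      · exact ⟨2, w, hw, e⟩
      · exact ⟨3, w, hw, e⟩
  exact k.final hx hbdd hJ
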